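/- arXiv:2308.10563 — 12 statements merged into one kernel-verified Lean document; each statement's English description precedes it below -/
import Mathlib

section
/- Suppose (π*, c̄*) is an optimal solution of the problem (RIOVLP₁¹), i.e. (π*, c̄*) ∈ F₁ and Σ_j d_j|c̄*_j − c_j| ≤ Σ_j d_j|c̄_j − c_j| for every (π, c̄) ∈ F₁. Then c̄* is an optimal solution of the problem (RIOVLP₁), i.e. c̄* ∈ F and Σ_j d_j|c̄*_j − c_j| ≤ Σ_j d_j|c̄_j − c_j| for every c̄ ∈ F. -/
open Matrix BigOperators

/-- Algebraic Farkas lemma. -/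
theorem farkas_aux {ι V : Type*} [AddCommGroup V] [Module ℝ V] (s : Finset ι) :
    ∀ (a : ι → V →ₗ[ℝ] ℝ) (c : V →ₗ[ℝ] ℝ), (∀ y, (∀ i ∈ s, 0 ≤ a i y) → 0 ≤ c y) →
      ∃ l : ι → ℝ, (∀ i, 0 ≤ l i) ∧ ∀ y, c y = ∑ i ∈ s, l i * a i y := by
  classical
  induction s using Finset.induction_on with
  | empty =>
    intro a c h
    refine ⟨0, fun i => le_rfl, fun y => ?_⟩
    have h1 := h y (by simp)
    have h2 := h (-y) (by simp)
    simp at h2 ⊢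
    linarith
  | insert k s hk ih =>
    intro a c h
    by_cases hc : ∀ y, (∀ i ∈ s, 0 ≤ a i y) → 0 ≤ c y
    · obtain ⟨l, hl, hs⟩ := ih a c hc
      refine ⟨Function.update l k 0, fun i => ?_, fun y => ?_⟩
      · by_cases hi : i = k
        · subst hi; simp
        · simp [hi, hl i]
      · rw [Finset.sum_insert hk, hs y]
        simp only [Function.update_self, zero_mul, zero_add]
        refine Finset.sum_congr rfl fun i hi => ?_
        rw [Function.update_of_ne (ne_of_mem_of_not_mem hi hk)]
    · push Not at hc
      obtain ⟨z, hz, hcz⟩ := hc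
      have hkz : a k z < 0 := by
        by_contra hcon
        have := h z (by
          intro i hi
          rcases Finset.mem_insert.1 hi with rfl | hi
          · linarith
          · exact hz i hi)
        linarith
      obtain ⟨t, ht, htk⟩ : ∃ t : ℝ, 0 < t ∧ t * a k z = -1 :=
        ⟨-(a k z)⁻¹, by simpa using hkz, by rw [neg_mul, inv_mul_cancel₀ hkz.ne]⟩
      obtain ⟨l, hl, hs⟩ := ih (fun i => a i + (t * a i z) • a k) (c + (t * c z) • a k) (by
        intro y hy
        have := h (y + (a k y * t) • z) (by
          intro i hi
          rcases Finset.mem_insert.1 hi with rfl | hi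
          · simp only [map_add, map_smul, smul_eq_mul]
            have : a i y + a i y * t * a i z = a i y * (1 + t * a i z) := by ring
            rw [this, htk]; simp
          · have := hy i hi
            simp only [LinearMap.add_apply, LinearMap.smul_apply, map_add, map_smul,
              smul_eq_mul] at this ⊢
            linarith)
        simp only [LinearMap.add_apply, LinearMap.smul_apply, map_add, map_smul,
              smul_eq_mul] at this ⊢
        linarith)
      have hS : 0 ≤ ∑ i ∈ s, l i * (t * a i z) :=
        Finset.sum_nonneg fun i hi => mul_nonneg (hl i) (mul_nonneg ht.le (hz i hi))
      have hT : t * c z < 0 := mul_neg_of_pos_of_neg ht hcz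
      refine ⟨Function.update l k (∑ i ∈ s, l i * (t * a i z) - t * c z), fun i => ?_,
        fun y => ?_⟩
      · by_cases hi : i = k
        · subst hi; simp only [Function.update_self]; linarith
        · simp [hi, hl i]
      · rw [Finset.sum_insert hk]
        have e : ∑ i ∈ s, Function.update l k (∑ i ∈ s, l i * (t * a i z) - t * c z) i * a i y
            = ∑ i ∈ s, l i * a i y := by
          refine Finset.sum_congr rfl fun i hi => ?_
          rw [Function.update_of_ne (ne_of_mem_of_not_mem hi hk)]
        rw [e]
        have h1 := hs y
        simp only [LinearMap.add_apply, LinearMap.smul_apply, smul_eq_mul, mul_add,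
          Finset.sum_add_distrib] at h1
        have e2 : ∑ i ∈ s, l i * (t * a i z * a k y)
            = (∑ i ∈ s, l i * (t * a i z)) * a k y := by
          rw [Finset.sum_mul]
          exact Finset.sum_congr rfl fun i _ => by ring
        rw [e2] at h1
        simp only [Function.update_self]
        linarith

theorem dual_exists {m n : ℕ} (A : Matrix (Fin m) (Fin n) ℝ) (x0 cbar : Fin n → ℝ)
    (hx0nn : ∀ j, 0 ≤ x0 j)
    (h : ∀ x : Fin n → ℝ, A.mulVec x = A.mulVec x0 → (∀ j, 0 ≤ x j) →
      cbar ⬝ᵥ x0 ≤ cbar ⬝ᵥ x) :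
    ∃ p : Fin m → ℝ, (∀ j, x0 j = 0 → Matrix.vecMul p A j ≤ cbar j) ∧
      (∀ j, 0 < x0 j → Matrix.vecMul p A j = cbar j) := by
  classical
  let row : Fin m → (Fin n → ℝ) →ₗ[ℝ] ℝ := fun i => (LinearMap.proj i).comp A.mulVecLin
  let a : Fin m ⊕ Fin m ⊕ Fin n → (Fin n → ℝ) →ₗ[ℝ] ℝ :=
    Sum.elim row (Sum.elim (fun i => -row i)
      (fun j => if x0 j = 0 then LinearMap.proj j else 0))
  let C : (Fin n → ℝ) →ₗ[ℝ] ℝ :=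
    { toFun := fun y => cbar ⬝ᵥ y
      map_add' := fun x y => dotProduct_add _ _ _
      map_smul' := fun r y => dotProduct_smul _ _ _ }
  obtain ⟨l, hl, hs⟩ := farkas_aux Finset.univ a C (by
    intro y hy
    have hA : A.mulVec y = 0 := by
      funext i
      have h1 := hy (Sum.inl i) (Finset.mem_univ _)
      have h2 := hy (Sum.inr (Sum.inl i)) (Finset.mem_univ _)
      simp [a, row] at h1 h2
      simp; linarith
    have hJ : ∀ j, x0 j = 0 → 0 ≤ y j := by
      intro j hj
      have h1 := hy (Sum.inr (Sum.inr j)) (Finset.mem_univ _)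
      simpa [a, hj] using h1
    have hev : ∀ᶠ e : ℝ in nhdsWithin 0 (Set.Ioi 0), ∀ j, 0 ≤ x0 j + e * y j := by
      rw [Filter.eventually_all]
      intro j
      rcases (hx0nn j).eq_or_lt with h0 | h0
      · filter_upwards [self_mem_nhdsWithin] with e he
        have he' : (0:ℝ) < e := he
        have := mul_nonneg he'.le (hJ j h0.symm)
        linarith
      · have hcont : Continuous fun e : ℝ => x0 j + e * y j := by fun_prop
        have : ∀ᶠ e : ℝ in nhds 0, 0 < x0 j + e * y j :=
          hcont.continuousAt.eventually (lt_mem_nhds (by simpa using h0))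
        exact (this.filter_mono nhdsWithin_le_nhds).mono fun e he => he.le
    obtain ⟨e, he, hepos⟩ := (hev.and self_mem_nhdsWithin).exists
    have hepos' : (0:ℝ) < e := hepos
    have := h (x0 + e • y) (by rw [mulVec_add, mulVec_smul, hA]; simp)
      (fun j => by simpa using he j)
    rw [dotProduct_add, dotProduct_smul, smul_eq_mul] at this
    change 0 ≤ cbar ⬝ᵥ y
    exact nonneg_of_mul_nonneg_right (by linarith : 0 ≤ e * (cbar ⬝ᵥ y)) hepos')
  have key : ∀ j, cbar j = Matrix.vecMul (fun i => l (Sum.inl i) - l (Sum.inr (Sum.inl i))) A j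
      + (if x0 j = 0 then l (Sum.inr (Sum.inr j)) else 0) := by
    intro j
    have h1 := hs (Pi.single j 1)
    have h2 : C (Pi.single j 1) = cbar j := by simp [C]
    have h3 : ∑ k, l (Sum.inr (Sum.inr k)) * a (Sum.inr (Sum.inr k)) (Pi.single j 1)
        = (if x0 j = 0 then l (Sum.inr (Sum.inr j)) else 0) := by
      rw [Finset.sum_eq_single j]
      · by_cases hj : x0 j = 0 <;> simp [a, hj]
      · intro k _ hk
        by_cases hj : x0 k = 0 <;> simp [a, hj, hk]
      · simp
    rw [h2, Fintype.sum_sum_type, Fintype.sum_sum_type, h3] at h1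
    rw [h1]
    simp [a, row, vecMul, dotProduct, sub_mul, Finset.sum_sub_distrib]
    ring
  refine ⟨fun i => l (Sum.inl i) - l (Sum.inr (Sum.inl i)), fun j hj => ?_, fun j hj => ?_⟩
  · have := key j
    rw [if_pos hj] at this
    have := hl (Sum.inr (Sum.inr j))
    linarith
  · have := key j
    rw [if_neg hj.ne'] at this
    linarith

/-- If `(π*, c̄*)` is an optimal solution of (RIOVLP₁¹) then `c̄*` is an
optimal solution of (RIOVLP₁). -/
theorem riovlp1_of_riovlp11 {m n : ℕ} (A : Matrix (Fin m) (Fin n) ℝ) (b : Fin m → ℝ)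
    (c d x0 : Fin n → ℝ) (K : ℝ)
    (hd : ∀ j, 0 < d j) (hx0A : A.mulVec x0 = b) (hx0nn : ∀ j, 0 ≤ x0 j)
    (F : Set (Fin n → ℝ))
    (hF : F = {cbar : Fin n → ℝ | cbar ⬝ᵥ x0 = K ∧
      ∀ x : Fin n → ℝ, A.mulVec x = b → (∀ j, 0 ≤ x j) → cbar ⬝ᵥ x0 ≤ cbar ⬝ᵥ x})
    (F1 : Set ((Fin m → ℝ) × (Fin n → ℝ)))
    (hF1 : F1 = {p : (Fin m → ℝ) × (Fin n → ℝ) |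
      (∀ j, x0 j = 0 → Matrix.vecMul p.1 A j ≤ p.2 j) ∧
      (∀ j, 0 < x0 j → Matrix.vecMul p.1 A j = p.2 j) ∧ p.2 ⬝ᵥ x0 = K})
    (pist : Fin m → ℝ) (cst : Fin n → ℝ)
    (hmem : (pist, cst) ∈ F1)
    (hopt : ∀ p ∈ F1, ∑ j, d j * |cst j - c j| ≤ ∑ j, d j * |p.2 j - c j|) :
    cst ∈ F ∧ ∀ cbar ∈ F, ∑ j, d j * |cst j - c j| ≤ ∑ j, d j * |cbar j - c j| := by
  subst hF hF1 hx0A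
  obtain ⟨h1, h2, h3⟩ := hmem
  refine ⟨⟨h3, fun x hx hnn => ?_⟩, fun cbar hcb => ?_⟩
  · have e1 : cst ⬝ᵥ x0 = Matrix.vecMul pist A ⬝ᵥ x0 := by
      refine Finset.sum_congr rfl fun j _ => ?_
      rcases (hx0nn j).eq_or_lt with h0 | h0
      · rw [← h0]; simp
      · have := h2 j h0
        simp only at this
        rw [this]
    rw [e1, ← dotProduct_mulVec, ← hx, dotProduct_mulVec]
    refine Finset.sum_le_sum fun j _ => mul_le_mul_of_nonneg_right ?_ (hnn j)
    rcases (hx0nn j).eq_or_lt with h0 | h0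
    · exact h1 j h0.symm
    · exact (h2 j h0).le
  · obtain ⟨p, hp1, hp2⟩ := dual_exists A x0 cbar hx0nn hcb.2
    exact hopt (p, cbar) ⟨hp1, hp2, hcb.1⟩
end

section
/- The feasible solution x⁰ is an optimal solution of the problem min{c̄·x : Ax = b, x ≥ 0} if and only if there exists π ∈ ℝᵐ such that π·A_j ≤ c̄_j for every column index j and π·A_j = c̄_j for every j with x⁰_j > 0 (i.e. π is dual feasible and satisfies the complementary slackness conditions x⁰_j(c̄_j − π·A_j) = 0 for all j). -/
open Matrix BigOperators

lemma exists_between_fam {P N : Type} [Finite P] [Finite N] (u : P → ℝ) (l : N → ℝ)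
    (h : ∀ p q, l q ≤ u p) : ∃ t, (∀ p, t ≤ u p) ∧ (∀ q, l q ≤ t) := by
  rcases isEmpty_or_nonempty N with hN | hN
  · rcases isEmpty_or_nonempty P with hP | hP
    · exact ⟨0, fun p => (hP.false p).elim, fun q => (hN.false q).elim⟩
    · obtain ⟨p, hp⟩ := Finite.exists_min u
      exact ⟨u p, hp, fun q => (hN.false q).elim⟩
  · obtain ⟨q, hq⟩ := Finite.exists_max l
    exact ⟨l q, fun p => h p q, hq⟩

lemma farkas_fm (m : ℕ) : ∀ (ι : Type) [Fintype ι] (a : ι → Fin m → ℝ) (c : ι → ℝ),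
    (∃ w : Fin m → ℝ, ∀ i, ∑ k, w k * a i k ≤ c i) ∨
    ∃ y : ι → ℝ, (∀ i, 0 ≤ y i) ∧ (∀ k, ∑ i, y i * a i k = 0) ∧ ∑ i, y i * c i < 0 := by
  classical
  induction m with
  | zero =>
    intro ι _ a c
    by_cases h : ∀ i, 0 ≤ c i
    · left; exact ⟨0, fun i => by simpa using h i⟩
    · right
      push Not at h
      obtain ⟨i, hi⟩ := h
      refine ⟨Pi.single i 1, fun j => ?_, fun k => k.elim0, ?_⟩
      · by_cases hj : j = i
        · subst hj; simp
        · simp [hj]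
      · simpa [Pi.single_apply] using hi
  | succ m ih =>
    intro ι _ a c
    let Z := {i // a i 0 = 0}
    let P := {i // 0 < a i 0}
    let N := {i // a i 0 < 0}
    let U : Z ⊕ (P × N) → ι → ℝ := fun k => match k with
      | .inl z => Pi.single z.1 1
      | .inr (p, q) => Pi.single p.1 (-a q.1 0) + Pi.single q.1 (a p.1 0)
    have hU0 : ∀ k i, 0 ≤ U k i := by
      rintro (z | ⟨p, q⟩) i
      · exact (Pi.single_nonneg.2 zero_le_one : (0 : ι → ℝ) ≤ Pi.single z.1 1) i
      · have h1 : (0 : ι → ℝ) ≤ Pi.single p.1 (-a q.1 0) :=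
          Pi.single_nonneg.2 (by have := q.2; linarith)
        have h2 : (0 : ι → ℝ) ≤ Pi.single q.1 (a p.1 0) := Pi.single_nonneg.2 p.2.le
        exact add_nonneg (h1 i) (h2 i)
    have hUl : ∀ z : Z, ∀ f : ι → ℝ, ∑ i, U (.inl z) i * f i = f z.1 := by
      intro z f; simp [U, Pi.single_apply]
    have hUr : ∀ (p : P) (q : N), ∀ f : ι → ℝ,
        ∑ i, U (.inr (p, q)) i * f i = (-a q.1 0) * f p.1 + a p.1 0 * f q.1 := by
      intro p q f; simp [U, Pi.single_apply, add_mul, Finset.sum_add_distrib]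
    have hUz : ∀ k, ∑ i, U k i * a i 0 = 0 := by
      rintro (z | ⟨p, q⟩)
      · rw [hUl z (fun i => a i 0)]; exact z.2
      · rw [hUr p q (fun i => a i 0)]; ring
    have hsw : ∀ (y : Z ⊕ (P × N) → ℝ) (f : ι → ℝ),
        ∑ i, (∑ k, y k * U k i) * f i = ∑ k, y k * ∑ i, U k i * f i := by
      intro y f
      simp only [Finset.sum_mul, Finset.mul_sum]
      rw [Finset.sum_comm]
      simp only [mul_assoc]
    rcases ih (Z ⊕ (P × N)) (fun k j => ∑ i, U k i * a i j.succ) (fun k => ∑ i, U k i * c i) with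
      ⟨w, hw⟩ | ⟨y, hy0, hy1, hy2⟩
    · left
      let r : ι → ℝ := fun i => c i - ∑ j, w j * a i j.succ
      have hr : ∀ k, 0 ≤ ∑ i, U k i * r i := by
        intro k
        have h := hw k
        have e : ∑ j, w j * ∑ i, U k i * a i j.succ = ∑ i, U k i * ∑ j, w j * a i j.succ := by
          simp only [Finset.mul_sum]
          rw [Finset.sum_comm]
          refine Finset.sum_congr rfl fun i _ => Finset.sum_congr rfl fun j _ => by ring
        simp only [r, mul_sub, Finset.sum_sub_distrib]
        linarith
      obtain ⟨t, ht1, ht2⟩ := exists_between_fam (fun p : P => r p.1 / a p.1 0)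
        (fun q : N => r q.1 / a q.1 0) (by
          intro p q
          have h := hr (.inr (p, q))
          rw [hUr] at h
          have hp := p.2
          have hq := q.2
          rw [div_le_iff_of_neg hq, div_mul_eq_mul_div, div_le_iff₀ hp]
          linarith)
      refine ⟨Fin.cons t w, fun i => ?_⟩
      rw [Fin.sum_univ_succ]
      simp only [Fin.cons_zero, Fin.cons_succ]
      suffices t * a i 0 ≤ r i by simp only [r] at this; linarith
      rcases lt_trichotomy (a i 0) 0 with h | h | h
      · exact (div_le_iff_of_neg h).1 (ht2 ⟨i, h⟩)
      · have := hr (.inl ⟨i, h⟩)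
        rw [hUl] at this
        simpa [h] using this
      · exact (le_div_iff₀ h).1 (ht1 ⟨i, h⟩)
    · right
      refine ⟨fun i => ∑ k, y k * U k i,
        fun i => Finset.sum_nonneg fun k _ => mul_nonneg (hy0 k) (hU0 k i), fun j => ?_, ?_⟩
      · rw [hsw y (fun i => a i j)]
        refine Fin.cases ?_ (fun j => ?_) j
        · simp [hUz]
        · exact hy1 j
      · rw [hsw]; exact hy2

/-- A feasible solution `x⁰` is optimal for `min {c̄·x : Ax = b, x ≥ 0}`
iff there exists a dual feasible `π` satisfying complementary slackness. -/
theorem lp_optimality_iff_dual_complementary {m n : ℕ} (A : Matrix (Fin m) (Fin n) ℝ)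
    (b : Fin m → ℝ) (cbar x0 : Fin n → ℝ)
    (hx0A : A.mulVec x0 = b) (hx0nn : ∀ j, 0 ≤ x0 j) :
    (∀ x : Fin n → ℝ, A.mulVec x = b → (∀ j, 0 ≤ x j) → cbar ⬝ᵥ x0 ≤ cbar ⬝ᵥ x) ↔
    (∃ π : Fin m → ℝ, (∀ j, Matrix.vecMul π A j ≤ cbar j) ∧
      (∀ j, 0 < x0 j → Matrix.vecMul π A j = cbar j)) := by
  have hdual : ∀ π : Fin m → ℝ, π ⬝ᵥ b = ∑ j, Matrix.vecMul π A j * x0 j := by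
    intro π
    rw [← hx0A, Matrix.dotProduct_mulVec]; rfl
  constructor
  · intro hopt
    rcases farkas_fm m (Option (Fin n)) (fun o k => o.elim (-b k) (fun j => A k j))
      (fun o => o.elim (-(cbar ⬝ᵥ x0)) cbar) with ⟨π, hπ⟩ | ⟨y, hy0, hy1, hy2⟩
    · have hf : ∀ j, Matrix.vecMul π A j ≤ cbar j := fun j => hπ (some j)
      refine ⟨π, hf, fun j hj => ?_⟩
      have h0 : cbar ⬝ᵥ x0 ≤ π ⬝ᵥ b := by
        have := hπ none
        simp only [Option.elim, mul_neg, Finset.sum_neg_distrib] at this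
        exact neg_le_neg_iff.1 this
      rw [hdual] at h0
      have hnn : ∀ j ∈ Finset.univ, 0 ≤ (cbar j - Matrix.vecMul π A j) * x0 j :=
        fun j _ => mul_nonneg (sub_nonneg.2 (hf j)) (hx0nn j)
      have hs : ∑ j, (cbar j - Matrix.vecMul π A j) * x0 j = 0 := by
        refine le_antisymm ?_ (Finset.sum_nonneg hnn)
        simp only [sub_mul, Finset.sum_sub_distrib]
        exact sub_nonpos.2 h0
      have := (Finset.sum_eq_zero_iff_of_nonneg hnn).1 hs j (Finset.mem_univ j)
      rcases mul_eq_zero.1 this with h | h <;> linarith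
    · exfalso
      simp only [Fintype.sum_option, Option.elim] at hy1 hy2
      set t := y none with ht
      have ht0 : 0 ≤ t := hy0 none
      let v : Fin n → ℝ := fun j => y (some j)
      have hv : A.mulVec v = t • b := by
        ext k
        have := hy1 k
        have e : A.mulVec v k = ∑ j, y (some j) * A k j := by
          simp [Matrix.mulVec, dotProduct, v, mul_comm]
        simp only [Pi.smul_apply, smul_eq_mul]
        rw [e]; linarith
      have hcv : cbar ⬝ᵥ v < t * (cbar ⬝ᵥ x0) := by
        have e : cbar ⬝ᵥ v = ∑ j, y (some j) * cbar j := by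
          simp [dotProduct, v, mul_comm]
        rw [e]; linarith
      have h1 : (0:ℝ) < 1 + t := by linarith
      have := hopt ((1 + t)⁻¹ • (x0 + v)) (by
        rw [Matrix.mulVec_smul, Matrix.mulVec_add, hx0A, hv]
        ext k
        simp only [Pi.smul_apply, Pi.add_apply, smul_eq_mul]
        field_simp) (fun j => mul_nonneg (inv_nonneg.2 h1.le) (add_nonneg (hx0nn j) (hy0 _)))
      rw [dotProduct_smul, dotProduct_add, smul_eq_mul, le_inv_mul_iff₀ h1] at this
      linarith
  · rintro ⟨π, hf, hcs⟩ x hx hxn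
    have e : cbar ⬝ᵥ x0 = π ⬝ᵥ b := by
      rw [hdual]
      refine Finset.sum_congr rfl fun j _ => ?_
      rcases (hx0nn j).eq_or_lt with h | h
      · simp [← h]
      · rw [hcs j h]
    rw [e, ← hx, Matrix.dotProduct_mulVec]
    exact Finset.sum_le_sum fun j _ => mul_le_mul_of_nonneg_right (hf j) (hxn j)
end

section
/- Let z₁ < z₂ be real numbers with F(z₁) ≠ ∅ and F(z₂) ≠ ∅. Then ψ is concave on [z₁, z₂]: for every λ ∈ [0,1], ψ(λz₁ + (1−λ)z₂) ≥ λψ(z₁) + (1−λ)ψ(z₂). -/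
open Matrix BigOperators

/-- Feasible region of the sub-problem `(D^z)`. -/
def Dfeas {m n : ℕ} (A : Matrix (Fin m) (Fin n) ℝ) (d x0 : Fin n → ℝ) (z : ℝ) :
    Set (Fin n → ℝ) :=
  {y | A.mulVec y = 0 ∧
    (∀ j, x0 j = 0 → -d j ≤ y j ∧ y j ≤ 0) ∧
    (∀ j, 0 < x0 j → x0 j * z - d j ≤ y j ∧ y j ≤ x0 j * z + d j)}

/-- `ψ(z) = sup {c·y : y ∈ F(z)}`. -/
noncomputable def psi {m n : ℕ} (A : Matrix (Fin m) (Fin n) ℝ)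
    (c d x0 : Fin n → ℝ) (z : ℝ) : ℝ :=
  sSup ((fun y => c ⬝ᵥ y) '' Dfeas A d x0 z)

/-- `ψ` is concave on `[z₁, z₂]` whenever `F(z₁)` and `F(z₂)` are nonempty. -/
theorem psi_concave {m n : ℕ} (A : Matrix (Fin m) (Fin n) ℝ)
    (c d x0 : Fin n → ℝ) (hd : ∀ j, 0 < d j) (hx0 : ∀ j, 0 ≤ x0 j)
    (z₁ z₂ : ℝ) (h12 : z₁ < z₂)
    (h1 : (Dfeas A d x0 z₁).Nonempty) (h2 : (Dfeas A d x0 z₂).Nonempty)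
    (lam : ℝ) (hlam0 : 0 ≤ lam) (hlam1 : lam ≤ 1) :
    lam * psi A c d x0 z₁ + (1 - lam) * psi A c d x0 z₂ ≤
      psi A c d x0 (lam * z₁ + (1 - lam) * z₂) := by
  refine le_of_forall_pos_le_add fun ε hε => ?_
  obtain ⟨_, ⟨y, hy, rfl⟩, hy'⟩ := exists_lt_of_lt_csSup (h1.image (fun y => c ⬝ᵥ y))
    (show psi A c d x0 z₁ - ε < _ from sub_lt_self _ hε)
  obtain ⟨_, ⟨w, hw, rfl⟩, hw'⟩ := exists_lt_of_lt_csSup (h2.image (fun y => c ⬝ᵥ y))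
    (show psi A c d x0 z₂ - ε < _ from sub_lt_self _ hε)
  have hmu : 0 ≤ 1 - lam := by linarith
  have hmem : lam • y + (1 - lam) • w ∈ Dfeas A d x0 (lam * z₁ + (1 - lam) * z₂) := by
    obtain ⟨a1, b1, c1⟩ := hy
    obtain ⟨a2, b2, c2⟩ := hw
    refine ⟨?_, fun j hj => ?_, fun j hj => ?_⟩
    · rw [Matrix.mulVec_add, Matrix.mulVec_smul, Matrix.mulVec_smul, a1, a2]; simp
    · obtain ⟨p, q⟩ := b1 j hj
      obtain ⟨r, s⟩ := b2 j hj
      simp only [Pi.add_apply, Pi.smul_apply, smul_eq_mul]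
      constructor <;> nlinarith [mul_le_mul_of_nonneg_left p hlam0,
        mul_le_mul_of_nonneg_left q hlam0, mul_le_mul_of_nonneg_left r hmu,
        mul_le_mul_of_nonneg_left s hmu]
    · obtain ⟨p, q⟩ := c1 j hj
      obtain ⟨r, s⟩ := c2 j hj
      simp only [Pi.add_apply, Pi.smul_apply, smul_eq_mul]
      constructor <;> linarith [mul_le_mul_of_nonneg_left p hlam0,
        mul_le_mul_of_nonneg_left q hlam0, mul_le_mul_of_nonneg_left r hmu,
        mul_le_mul_of_nonneg_left s hmu]
  have hbdd : ∀ z, BddAbove ((fun y => c ⬝ᵥ y) '' Dfeas A d x0 z) := by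
    intro z
    refine ⟨∑ j, |c j| * (|x0 j * z| + d j), ?_⟩
    rintro _ ⟨v, ⟨-, hb, hc⟩, rfl⟩
    refine Finset.sum_le_sum fun j _ => ?_
    have hv : |v j| ≤ |x0 j * z| + d j := by
      have := hd j
      have h3 := neg_abs_le (x0 j * z)
      have h4 := le_abs_self (x0 j * z)
      rw [abs_le]
      rcases (hx0 j).eq_or_lt with h | h
      · obtain ⟨p, q⟩ := hb j h.symm
        constructor <;> linarith
      · obtain ⟨p, q⟩ := hc j h
        constructor <;> linarith
    calc c j * v j ≤ |c j * v j| := le_abs_self _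
      _ = |c j| * |v j| := abs_mul _ _
      _ ≤ _ := mul_le_mul_of_nonneg_left hv (abs_nonneg _)
  have hle : c ⬝ᵥ (lam • y + (1 - lam) • w) ≤ psi A c d x0 (lam * z₁ + (1 - lam) * z₂) :=
    le_csSup (hbdd _) ⟨_, hmem, rfl⟩
  rw [dotProduct_add, dotProduct_smul, dotProduct_smul, smul_eq_mul, smul_eq_mul] at hle
  have e1 := mul_le_mul_of_nonneg_left hy'.le hlam0
  have e2 := mul_le_mul_of_nonneg_left hw'.le hmu
  simp only at e1 e2
  linarith
end

section
/- If z₁ < 0 and F(z₁) = ∅, then F(z) = ∅ for every z ≤ z₁. -/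
open Matrix BigOperators

/-- if `z₁ < 0` and `F(z₁) = ∅`, then `F(z) = ∅` for every `z ≤ z₁`. -/
theorem Dfeas_empty_of_le {m n : ℕ} (A : Matrix (Fin m) (Fin n) ℝ)
    (c d x0 : Fin n → ℝ) (hd : ∀ j, 0 < d j) (hx0 : ∀ j, 0 ≤ x0 j)
    (z₁ : ℝ) (hz₁ : z₁ < 0) (hempty : Dfeas A d x0 z₁ = ∅) :
    ∀ z : ℝ, z ≤ z₁ → Dfeas A d x0 z = ∅ := by
  intro z hz
  rw [Set.eq_empty_iff_forall_notMem] at hempty ⊢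
  rintro y ⟨hA, h0, h1⟩
  have hzn : z < 0 := lt_of_le_of_lt hz hz₁
  obtain ⟨t, ht⟩ : ∃ t : ℝ, t = z₁ / z := ⟨_, rfl⟩
  have htz : t * z = z₁ := by rw [ht]; exact div_mul_cancel₀ _ hzn.ne
  have ht0 : 0 ≤ t := by rw [ht]; exact div_nonneg_of_nonpos hz₁.le hzn.le
  have ht1 : t ≤ 1 := by rw [ht]; exact (div_le_one_of_neg hzn).2 hz
  apply hempty (t • y)
  refine ⟨by rw [Matrix.mulVec_smul, hA, smul_zero], ?_, ?_⟩
  · intro j hj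
    obtain ⟨ha, hb⟩ := h0 j hj
    have hdj := hd j
    simp only [Pi.smul_apply, smul_eq_mul]
    constructor <;> nlinarith
  · intro j hj
    obtain ⟨ha, hb⟩ := h1 j hj
    have htd : t * d j ≤ d j := mul_le_of_le_one_left (hd j).le ht1
    have e : x0 j * z₁ = t * (x0 j * z) := by rw [← htz]; ring
    have h2 := mul_le_mul_of_nonneg_left ha ht0
    have h3 := mul_le_mul_of_nonneg_left hb ht0
    simp only [Pi.smul_apply, smul_eq_mul]
    rw [e]
    constructor <;> linarith
end

section
/- If z₂ > 0 and F(z₂) = ∅, then F(z) = ∅ for every z ≥ z₂. -/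
open Matrix BigOperators

/-- if `z₂ > 0` and `F(z₂) = ∅`, then `F(z) = ∅` for every `z ≥ z₂`. -/
theorem Dfeas_empty_of_ge {m n : ℕ} (A : Matrix (Fin m) (Fin n) ℝ)
    (c d x0 : Fin n → ℝ) (hd : ∀ j, 0 < d j) (hx0 : ∀ j, 0 ≤ x0 j)
    (z₂ : ℝ) (hz₂ : 0 < z₂) (hempty : Dfeas A d x0 z₂ = ∅) :
    ∀ z : ℝ, z₂ ≤ z → Dfeas A d x0 z = ∅ := by
  intro z hz
  rw [Set.eq_empty_iff_forall_notMem]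
  rintro y ⟨hA, h0, h1⟩
  have hzp : 0 < z := lt_of_lt_of_le hz₂ hz
  obtain ⟨t, ht⟩ : ∃ t, t = z₂ / z := ⟨_, rfl⟩
  have ht0 : 0 ≤ t := by rw [ht]; positivity
  have ht1 : t ≤ 1 := by rw [ht]; exact (div_le_one hzp).2 hz
  have htz : z₂ = t * z := by rw [ht]; field_simp
  have hmem : t • y ∈ Dfeas A d x0 z₂ := by
    refine ⟨?_, ?_, ?_⟩
    · rw [Matrix.mulVec_smul, hA, smul_zero]
    · intro j hj
      obtain ⟨a, b⟩ := h0 j hj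
      have := hd j
      simp only [Pi.smul_apply, smul_eq_mul]
      constructor <;> nlinarith
    · intro j hj
      obtain ⟨a, b⟩ := h1 j hj
      have hdj := mul_le_mul_of_nonneg_right ht1 (hd j).le
      have a' := mul_le_mul_of_nonneg_left a ht0
      have b' := mul_le_mul_of_nonneg_left b ht0
      simp only [Pi.smul_apply, smul_eq_mul]
      rw [htz]
      constructor <;> linarith
  rw [hempty] at hmem
  exact hmem
end

section
/- If there exists z₁ < 0 with F(z₁) = ∅, then there exists a left break point: a real number z_l < 0 such that F(z) = ∅ for every z < z_l and F(z) ≠ ∅ for every z ∈ [z_l, 0]. -/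
open Matrix BigOperators

/-- if `F(z₁) = ∅` for some `z₁ < 0`, then the left break point exists. -/
theorem exists_left_break_point {m n : ℕ} (A : Matrix (Fin m) (Fin n) ℝ)
    (c d x0 : Fin n → ℝ) (hd : ∀ j, 0 < d j) (hx0 : ∀ j, 0 ≤ x0 j)
    (h : ∃ z₁ : ℝ, z₁ < 0 ∧ Dfeas A d x0 z₁ = ∅) :
    ∃ zl : ℝ, zl < 0 ∧ (∀ z : ℝ, z < zl → Dfeas A d x0 z = ∅) ∧
      (∀ z ∈ Set.Icc zl 0, (Dfeas A d x0 z).Nonempty) := by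
  obtain ⟨z₁, hz₁, hF⟩ := h
  have conv : ∀ a b : ℝ, a ≤ b → b ≤ 0 → (Dfeas A d x0 a).Nonempty →
      (Dfeas A d x0 b).Nonempty := by
    rintro a b hab hb ⟨y, hy1, hy2, hy3⟩
    rcases hb.eq_or_lt with rfl | hb0
    · refine ⟨0, by simp, fun j _ => ⟨?_, ?_⟩, fun j _ => ⟨?_, ?_⟩⟩ <;>
        simp [(hd j).le]
    have ha : a < 0 := lt_of_le_of_lt hab hb0
    obtain ⟨t, ht0, ht1, htb⟩ : ∃ t : ℝ, 0 ≤ t ∧ t ≤ 1 ∧ b = t * a := by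
      refine ⟨b / a, div_nonneg_of_nonpos hb ha.le, ?_, ?_⟩
      · rw [div_le_one_of_neg ha]; exact hab
      · exact (div_mul_cancel₀ b ha.ne).symm
    refine ⟨t • y, ?_, fun j hj => ?_, fun j hj => ?_⟩
    · rw [Matrix.mulVec_smul, hy1, smul_zero]
    · have := hy2 j hj
      have := hd j
      simp only [Pi.smul_apply, smul_eq_mul]
      constructor <;> nlinarith
    · obtain ⟨h1, h2⟩ := hy3 j hj
      have h3 := hd j
      have e1 := mul_le_mul_of_nonneg_left h1 ht0
      have e2 := mul_le_mul_of_nonneg_left h2 ht0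
      have e3 := mul_le_mul_of_nonneg_right ht1 h3.le
      simp only [Pi.smul_apply, smul_eq_mul]
      subst htb
      constructor <;> nlinarith
  let K : Set (ℝ × (Fin n → ℝ)) := {p | p.1 ∈ Set.Icc z₁ 0 ∧ p.2 ∈ Dfeas A d x0 p.1}
  have hKcl : IsClosed K := by
    have : K = {p | z₁ ≤ p.1} ∩ {p | p.1 ≤ 0} ∩ {p | A.mulVec p.2 = 0} ∩
        (⋂ j, ⋂ (_ : x0 j = 0), ({p | -d j ≤ p.2 j} ∩ {p | p.2 j ≤ 0})) ∩
        (⋂ j, ⋂ (_ : 0 < x0 j),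
          ({p | x0 j * p.1 - d j ≤ p.2 j} ∩ {p | p.2 j ≤ x0 j * p.1 + d j})) := by
      ext p
      simp only [K, Dfeas, Set.mem_setOf_eq, Set.mem_inter_iff, Set.mem_iInter, Set.mem_Icc]
      tauto
    rw [this]
    refine IsClosed.inter (IsClosed.inter (IsClosed.inter (IsClosed.inter ?_ ?_) ?_) ?_) ?_
    · exact isClosed_le (by fun_prop) (by fun_prop)
    · exact isClosed_le (by fun_prop) (by fun_prop)
    · exact isClosed_eq (Continuous.matrix_mulVec continuous_const continuous_snd)
        continuous_const
    · exact isClosed_iInter fun j => isClosed_iInter fun _ =>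
        (isClosed_le (by fun_prop) (by fun_prop)).inter (isClosed_le (by fun_prop) (by fun_prop))
    · exact isClosed_iInter fun j => isClosed_iInter fun _ =>
        (isClosed_le (by fun_prop) (by fun_prop)).inter (isClosed_le (by fun_prop) (by fun_prop))
  have hKc : IsCompact K := by
    have hbox : IsCompact (Set.Icc z₁ 0 ×ˢ
        Set.Icc (fun j => x0 j * z₁ - d j) (fun j => d j) : Set (ℝ × (Fin n → ℝ))) :=
      isCompact_Icc.prod isCompact_Icc
    refine hbox.of_isClosed_subset hKcl ?_
    rintro ⟨z, y⟩ ⟨⟨hz1, hz2⟩, -, h2, h3⟩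
    refine ⟨⟨hz1, hz2⟩, fun j => ?_, fun j => ?_⟩ <;> dsimp only at * <;>
      have hdj := hd j <;> rcases (hx0 j).eq_or_lt with h0 | h0
    · have := h2 j h0.symm
      rw [← h0]; linarith
    · have := h3 j h0
      nlinarith
    · have := h2 j h0.symm
      linarith
    · have := h3 j h0
      nlinarith
  obtain ⟨z₂, hz₂, hz₂0, hz₂K⟩ : ∃ z : ℝ, z₁ < z ∧ z < 0 ∧ ∀ j, 0 ≤ x0 j * z + d j := by
    have e1 : ∀ᶠ z : ℝ in nhds 0, ∀ j, 0 < x0 j * z + d j := by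
      rw [Filter.eventually_all]
      intro j
      have hc : Continuous fun z : ℝ => x0 j * z + d j := by fun_prop
      exact hc.continuousAt.eventually (lt_mem_nhds (by simpa using hd j))
    have e2 : ∀ᶠ z : ℝ in nhds 0, z₁ < z := lt_mem_nhds hz₁
    have e3 : ∀ᶠ z : ℝ in nhdsWithin 0 (Set.Iio 0), z < 0 := self_mem_nhdsWithin
    obtain ⟨z, ⟨h1, h2⟩, h3⟩ :=
      (((e1.and e2).filter_mono nhdsWithin_le_nhds).and e3).exists
    exact ⟨z, h2, h3, fun j => (h1 j).le⟩
  have hmem : ((z₂, 0) : ℝ × (Fin n → ℝ)) ∈ K := by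
    refine ⟨⟨hz₂.le, hz₂0.le⟩, by simp, fun j _ => ?_, fun j hj => ?_⟩
    · simp [(hd j).le]
    · have := hd j
      refine ⟨?_, hz₂K j⟩
      have := mul_neg_of_pos_of_neg hj hz₂0
      show x0 j * z₂ - d j ≤ 0
      linarith
  obtain ⟨⟨zl, y⟩, hpK, hmin⟩ := hKc.exists_isMinOn ⟨_, hmem⟩ continuous_fst.continuousOn
  have hle : ∀ p ∈ K, zl ≤ p.1 := fun p hp => hmin hp
  refine ⟨zl, lt_of_le_of_lt (hle _ hmem) hz₂0, fun z hz => ?_, fun z hz =>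
    conv zl z hz.1 hz.2 ⟨y, hpK.2⟩⟩
  by_contra hne
  obtain ⟨w, hw⟩ := Set.nonempty_iff_ne_empty.mpr hne
  have hzl0 : zl ≤ 0 := hpK.1.2
  rcases le_total z z₁ with hzz | hzz
  · have := conv z z₁ hzz hz₁.le ⟨w, hw⟩
    rw [hF] at this
    exact Set.not_nonempty_empty this
  · have := hle (z, w) ⟨⟨hzz, by dsimp only; linarith⟩, hw⟩
    dsimp only at this
    linarith
end

section
/- If there exists z₂ > 0 with F(z₂) = ∅, then there exists a right break point: a real number z_r > 0 such that F(z) = ∅ for every z > z_r and F(z) ≠ ∅ for every z ∈ [0, z_r]. -/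
open Matrix BigOperators

theorem Dfeas_scale {m n : ℕ} (A : Matrix (Fin m) (Fin n) ℝ)
    (d x0 : Fin n → ℝ) (hd : ∀ j, 0 < d j) {z w : ℝ} (hz : 0 ≤ z) (hzw : z ≤ w)
    (hw : 0 < w) (h : (Dfeas A d x0 w).Nonempty) : (Dfeas A d x0 z).Nonempty := by
  obtain ⟨y, h1, h2, h3⟩ := h
  obtain ⟨t, ht0, ht1, rfl⟩ : ∃ t : ℝ, 0 ≤ t ∧ t ≤ 1 ∧ z = t * w :=
    ⟨z / w, by positivity, (div_le_one hw).2 hzw, by field_simp⟩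
  refine ⟨t • y, ?_, ?_, ?_⟩
  · rw [Matrix.mulVec_smul, h1, smul_zero]
  · intro j hj
    obtain ⟨ha, hb⟩ := h2 j hj
    have := hd j
    simp only [Pi.smul_apply, smul_eq_mul]
    constructor <;> nlinarith
  · intro j hj
    obtain ⟨ha, hb⟩ := h3 j hj
    have h4 := mul_le_mul_of_nonneg_left ha ht0
    have h5 := mul_le_mul_of_nonneg_left hb ht0
    have h6 := mul_le_mul_of_nonneg_right ht1 (hd j).le
    simp only [Pi.smul_apply, smul_eq_mul]
    constructor <;> nlinarith

theorem Dfeas_small {m n : ℕ} (A : Matrix (Fin m) (Fin n) ℝ)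
    (d x0 : Fin n → ℝ) (hd : ∀ j, 0 < d j) (hx0 : ∀ j, 0 ≤ x0 j) {w : ℝ} (hw : 0 < w) :
    ∃ z, 0 < z ∧ z ≤ w ∧ (0 : Fin n → ℝ) ∈ Dfeas A d x0 z := by
  have hnn : ∀ j ∈ Finset.univ, 0 ≤ x0 j / d j := fun j _ => div_nonneg (hx0 j) (hd j).le
  have hs : 0 ≤ ∑ j, x0 j / d j := Finset.sum_nonneg hnn
  have hwi : 0 < w⁻¹ := inv_pos.2 hw
  have hM : 0 < (∑ j, x0 j / d j) + w⁻¹ := by linarith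
  have key : ∀ j, x0 j * ((∑ j, x0 j / d j) + w⁻¹)⁻¹ ≤ d j := by
    intro j
    rw [← div_eq_mul_inv, div_le_iff₀ hM, mul_comm, ← div_le_iff₀ (hd j)]
    have := Finset.single_le_sum hnn (Finset.mem_univ j)
    linarith
  refine ⟨((∑ j, x0 j / d j) + w⁻¹)⁻¹, inv_pos.2 hM, ?_, ?_, ?_, ?_⟩
  · exact inv_le_of_inv_le₀ hw (by linarith)
  · simp
  · intro j _
    have := hd j
    simp only [Pi.zero_apply]
    constructor <;> linarith
  · intro j _
    have := hd j
    have := key j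
    have := mul_nonneg (hx0 j) (inv_pos.2 hM).le
    simp only [Pi.zero_apply]
    constructor <;> linarith

theorem Dfeas_closed {m n : ℕ} (A : Matrix (Fin m) (Fin n) ℝ) (d x0 : Fin n → ℝ) :
    IsClosed {p : ℝ × (Fin n → ℝ) | p.2 ∈ Dfeas A d x0 p.1} := by
  have heq : {p : ℝ × (Fin n → ℝ) | p.2 ∈ Dfeas A d x0 p.1} =
      {p : ℝ × (Fin n → ℝ) | A.mulVec p.2 = 0} ∩
      ((⋂ j, ⋂ (_ : x0 j = 0), {p : ℝ × (Fin n → ℝ) | -d j ≤ p.2 j} ∩ {p | p.2 j ≤ 0}) ∩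
      (⋂ j, ⋂ (_ : 0 < x0 j), {p : ℝ × (Fin n → ℝ) | x0 j * p.1 - d j ≤ p.2 j} ∩
        {p | p.2 j ≤ x0 j * p.1 + d j})) := by
    ext p
    simp [Dfeas]
  rw [heq]
  refine IsClosed.inter ?_ (IsClosed.inter ?_ ?_)
  · exact isClosed_eq (by fun_prop) continuous_const
  · refine isClosed_iInter fun j => isClosed_iInter fun _ => IsClosed.inter ?_ ?_
    · exact isClosed_le (by fun_prop) (by fun_prop)
    · exact isClosed_le (by fun_prop) (by fun_prop)
  · refine isClosed_iInter fun j => isClosed_iInter fun _ => IsClosed.inter ?_ ?_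
    · exact isClosed_le (by fun_prop) (by fun_prop)
    · exact isClosed_le (by fun_prop) (by fun_prop)

/-- if `F(z₂) = ∅` for some `z₂ > 0`, then the right break point exists. -/
theorem exists_right_break_point {m n : ℕ} (A : Matrix (Fin m) (Fin n) ℝ)
    (c d x0 : Fin n → ℝ) (hd : ∀ j, 0 < d j) (hx0 : ∀ j, 0 ≤ x0 j)
    (h : ∃ z₂ : ℝ, 0 < z₂ ∧ Dfeas A d x0 z₂ = ∅) :
    ∃ zr : ℝ, 0 < zr ∧ (∀ z : ℝ, zr < z → Dfeas A d x0 z = ∅) ∧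
      (∀ z ∈ Set.Icc 0 zr, (Dfeas A d x0 z).Nonempty) := by
  obtain ⟨w, hw, hwe⟩ := h
  have hK : IsCompact ((Set.Icc 0 w ×ˢ
      Set.pi Set.univ (fun j => Set.Icc (-d j) (x0 j * w + d j))) ∩
      {p : ℝ × (Fin n → ℝ) | p.2 ∈ Dfeas A d x0 p.1}) :=
    (isCompact_Icc.prod (isCompact_univ_pi fun j => isCompact_Icc)).inter_right
      (Dfeas_closed A d x0)
  have hmem : ∀ z y, 0 ≤ z → z ≤ w → y ∈ Dfeas A d x0 z → (z, y) ∈ ((Set.Icc 0 w ×ˢ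
      Set.pi Set.univ (fun j => Set.Icc (-d j) (x0 j * w + d j))) ∩
      {p : ℝ × (Fin n → ℝ) | p.2 ∈ Dfeas A d x0 p.1}) := by
    intro z y hz hzw hy
    refine ⟨⟨⟨hz, hzw⟩, fun j _ => ?_⟩, hy⟩
    have h0 := mul_nonneg (hx0 j) hz
    have h1 := mul_le_mul_of_nonneg_left hzw (hx0 j)
    have h2 := hd j
    rcases (hx0 j).eq_or_lt with hj | hj
    · obtain ⟨ha, hb⟩ := hy.2.1 j hj.symm
      exact ⟨ha, by dsimp only; linarith⟩
    · obtain ⟨ha, hb⟩ := hy.2.2 j hj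
      constructor <;> dsimp only <;> linarith
  obtain ⟨z0, hz0, hz0w, hy0⟩ := Dfeas_small A d x0 hd hx0 hw
  obtain ⟨⟨zr, yr⟩, hr, hmax⟩ := hK.exists_isMaxOn ⟨_, hmem z0 0 hz0.le hz0w hy0⟩
    continuous_fst.continuousOn
  have hpos : 0 < zr := lt_of_lt_of_le hz0 (hmax (hmem z0 0 hz0.le hz0w hy0))
  refine ⟨zr, hpos, ?_, ?_⟩
  · intro z hz
    by_contra hne
    have hne' := Set.nonempty_iff_ne_empty.2 hne
    rcases le_total z w with hzw | hzw
    · obtain ⟨y, hy⟩ := hne'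
      have : z ≤ zr := hmax (hmem z y (hpos.trans hz).le hzw hy)
      linarith
    · have := Dfeas_scale A d x0 hd hw.le hzw (hpos.trans hz) hne'
      rw [hwe] at this
      exact Set.not_nonempty_empty this
  · intro z hz
    exact Dfeas_scale A d x0 hd hz.1 hz.2 hpos ⟨yr, hr.2⟩
end

section
/- Suppose A is totally unimodular, x⁰ and d are integer vectors, and J̄ ≠ ∅. Let z₀ ∈ ℝ be a turning coordinate of ψ in the following sense: there exists ε₀ > 0 such that F(z) ≠ ∅ for all z ∈ [z₀ − ε₀, z₀ + ε₀], and for every ε > 0 there are no real numbers a, b with ψ(z) = a·z + b for all z ∈ [z₀ − ε, z₀ + ε]. Then there exist integers ς and σ with σ ≠ 0 such that z₀ = ς/σ, |σ| ≤ 2·|J̄|·x⁰_max, and |ς| ≤ (n + |J̄|)·d_max. -/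
open Matrix BigOperators

/-- Every square submatrix has determinant `0`, `1` or `-1`. -/
def TotUnimodular {m n : ℕ} (A : Matrix (Fin m) (Fin n) ℝ) : Prop :=
  ∀ (k : ℕ) (f : Fin k → Fin m) (g : Fin k → Fin n),
    (A.submatrix f g).det = 0 ∨ (A.submatrix f g).det = 1 ∨ (A.submatrix f g).det = -1

lemma tu_det {m n : ℕ} {A : Matrix (Fin m) (Fin n) ℝ} (hTU : TotUnimodular A)
    {ι : Type*} [Fintype ι] [DecidableEq ι] (f : ι → Fin m) (g : ι → Fin n) :
    ∃ a : ℤ, (A.submatrix f g).det = a ∧ |(a : ℝ)| ≤ 1 := by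
  let e := (Fintype.equivFin ι).symm
  have h := hTU (Fintype.card ι) (f ∘ e) (g ∘ e)
  have h2 : (A.submatrix (f ∘ e) (g ∘ e)).det = (A.submatrix f g).det := by
    rw [← Matrix.submatrix_submatrix, Matrix.det_submatrix_equiv_self]
  rw [h2] at h
  rcases h with h | h | h
  · exact ⟨0, by simp [h], by simp⟩
  · exact ⟨1, by simp [h], by simp⟩
  · exact ⟨-1, by simp [h], by simp⟩

lemma exists_rows {m : ℕ} {ι : Type} [Fintype ι] [DecidableEq ι]
    (M : Matrix (Fin m) ι ℝ) (hM : ∀ v, M *ᵥ v = 0 → v = 0) :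
    ∃ f : ι → Fin m, (M.submatrix f id).det ≠ 0 := by
  have hinj : Function.Injective M.mulVec := by
    intro a b hab
    have := hM (a - b) (by rw [Matrix.mulVec_sub]; exact sub_eq_zero.2 hab)
    exact sub_eq_zero.1 this
  have hli := Matrix.mulVec_injective_iff.1 hinj
  have hrank : M.rank = Fintype.card ι := by
    rw [← Matrix.rank_transpose]
    exact LinearIndependent.rank_matrix (M := Mᵀ) hli
  rw [Matrix.rank_eq_finrank_span_row] at hrank
  obtain ⟨f, hmem, -, hlf⟩ := Submodule.exists_fun_fin_finrank_span_eq ℝ (Set.range M.row)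
  choose g hg using hmem
  let e := Fintype.equivFinOfCardEq hrank.symm
  refine ⟨g ∘ e, ?_⟩
  have h1 : (M.submatrix (g ∘ e) id).row = f ∘ e := by
    funext i
    exact hg (e i)
  have h2 : LinearIndependent ℝ (M.submatrix (g ∘ e) id).row := by
    rw [h1]
    exact hlf.comp e e.injective
  rw [Matrix.linearIndependent_rows_iff_isUnit, Matrix.isUnit_iff_isUnit_det] at h2
  exact h2.ne_zero

lemma exists_eps {n : ℕ} (s lo up u : Fin n → ℝ) (hs : ∀ j, lo j ≤ s j ∧ s j ≤ up j)
    (hu : ∀ j, (s j = lo j ∨ s j = up j) → u j = 0) :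
    ∃ ε > 0, ∀ t : ℝ, |t| ≤ ε → ∀ j, lo j ≤ s j + t * u j ∧ s j + t * u j ≤ up j := by
  have h : ∀ᶠ t : ℝ in nhds 0, ∀ j, lo j ≤ s j + t * u j ∧ s j + t * u j ≤ up j := by
    rw [Filter.eventually_all]
    intro j
    by_cases hj : s j = lo j ∨ s j = up j
    · rw [hu j hj]
      simpa using hs j
    · push Not at hj
      have hc : Filter.Tendsto (fun t : ℝ => s j + t * u j) (nhds 0) (nhds (s j)) := by
        have : Continuous (fun t : ℝ => s j + t * u j) := by fun_prop
        simpa using this.tendsto 0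
      have h1 := hc.eventually (lt_mem_nhds (lt_of_le_of_ne (hs j).1 (Ne.symm hj.1)))
      have h2 := hc.eventually (gt_mem_nhds (lt_of_le_of_ne (hs j).2 hj.2))
      filter_upwards [h1, h2] with t ht1 ht2
      exact ⟨ht1.le, ht2.le⟩
  obtain ⟨ε, hε, H⟩ := Metric.eventually_nhds_iff.1 h
  refine ⟨ε / 2, by positivity, fun t ht => H ?_⟩
  rw [Real.dist_eq, sub_zero]
  linarith

lemma algebra_part {m n : ℕ} (A : Matrix (Fin m) (Fin n) ℝ) (hTU : TotUnimodular A)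
    (x y : Fin n → ℝ) (z : ℝ) (T : Fin n → Prop) [DecidablePred T] (hy : A *ᵥ y = 0)
    (h1 : ∀ v, A *ᵥ v = 0 → (∀ j, T j → v j = 0) → v = 0)
    (h2 : ¬ ∃ w, A *ᵥ w = 0 ∧ ∀ j, T j → w j = x j) :
    ∃ D : Fin n → ℤ, (∀ j, |(D j : ℝ)| ≤ 1) ∧
      (∑ j, (if T j then x j else 0) * (D j : ℝ)) ≠ 0 ∧
      (∑ j, (if T j then x j else 0) * (D j : ℝ)) * z =
        - ∑ j, (if T j then y j - x j * z else 0) * (D j : ℝ) := by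
  let ι := Option {j // ¬ T j}
  let B : Matrix (Fin n) ι ℝ := fun j o => o.elim (if T j then x j else 0)
    (fun k => if j = k.1 then 1 else 0)
  have hBT : ∀ v j, T j → (B *ᵥ v) j = x j * v none := by
    intro v j hj
    simp only [Matrix.mulVec, dotProduct, ι, Fintype.sum_option, B, Option.elim, hj, if_true]
    rw [Finset.sum_eq_zero, add_zero]
    rintro ⟨k, hk⟩ -
    rw [if_neg (by rintro rfl; exact hk hj), zero_mul]
  have hBN : ∀ v j (hj : ¬ T j), (B *ᵥ v) j = v (some ⟨j, hj⟩) := by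
    intro v j hj
    simp only [Matrix.mulVec, dotProduct, ι, Fintype.sum_option, B, Option.elim, hj, if_false]
    rw [Finset.sum_eq_single ⟨j, hj⟩]
    · simp
    · rintro ⟨k, hk⟩ - hne
      rw [if_neg (by rintro rfl; exact hne rfl), zero_mul]
    · simp
  have hM : ∀ v, (A * B) *ᵥ v = 0 → v = 0 := by
    intro v hv
    rw [← Matrix.mulVec_mulVec] at hv
    have hn : v none = 0 := by
      by_contra hne
      refine h2 ⟨(v none)⁻¹ • (B *ᵥ v), by rw [Matrix.mulVec_smul, hv, smul_zero], ?_⟩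
      intro j hj
      rw [Pi.smul_apply, hBT v j hj, smul_eq_mul]
      field_simp
    have hw := h1 _ hv (fun j hj => by rw [hBT v j hj, hn, mul_zero])
    funext o
    rcases o with _ | ⟨j, hj⟩
    · exact hn
    · rw [← hBN v j hj, hw]; rfl
  obtain ⟨f, hf⟩ := exists_rows (A * B) hM
  set M' := (A * B).submatrix f id with hM'
  have hcol : ∀ i k, M' i (some k) = A (f i) k.1 := by
    intro i k
    have : M' i (some k) = ∑ j, A (f i) j * B j (some k) := rfl
    rw [this]
    simp [B]
  have hD : ∀ j, ∃ a : ℤ, M'.cramer (fun i => A (f i) j) none = a ∧ |(a : ℝ)| ≤ 1 := by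
    intro j
    obtain ⟨a, ha, ha'⟩ := tu_det hTU f (fun o : ι => o.elim j (fun k => k.1))
    refine ⟨a, ?_, ha'⟩
    rw [← ha, Matrix.cramer_apply]
    congr 1
    ext i o
    rcases o with _ | k
    · simp
    · simp [hcol]
  choose D hD hD' using hD
  have hlin : ∀ u : Fin n → ℝ, M'.cramer (fun i => (A *ᵥ u) (f i)) none
      = ∑ j, u j * (D j : ℝ) := by
    intro u
    have : (fun i => (A *ᵥ u) (f i)) = ∑ j, u j • (fun i => A (f i) j) := by
      funext i
      simp [Matrix.mulVec, dotProduct, mul_comm]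
    rw [this, map_sum, Finset.sum_apply]
    simp [hD]
  have hdet : M'.det = ∑ j, (if T j then x j else 0) * (D j : ℝ) := by
    rw [← hlin, Matrix.cramer_apply]
    congr 1
    ext i o
    rcases o with _ | k
    · have : M' i none = ∑ j, A (f i) j * B j none := rfl
      rw [this]
      simp [B, Matrix.mulVec, dotProduct]
    · simp
  refine ⟨D, hD', hdet ▸ hf, ?_⟩
  rw [← hdet, ← hlin]
  let v : ι → ℝ := fun o => o.elim z (fun k => y k.1)
  have hBv : B *ᵥ v = y - fun j => if T j then y j - x j * z else 0 := by
    funext j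
    by_cases hj : T j
    · rw [hBT v j hj]; simp [hj, v]
    · rw [hBN v j hj]; simp [hj, v]
  have hMv : M' *ᵥ v = - (fun i => (A *ᵥ fun j => if T j then y j - x j * z else 0) (f i)) := by
    funext i
    have : (M' *ᵥ v) i = ((A * B) *ᵥ v) (f i) := rfl
    rw [this, ← Matrix.mulVec_mulVec, hBv, Matrix.mulVec_sub, hy]
    simp
  have hc : M'.cramer (M' *ᵥ v) = M'.det • v := by
    rw [Matrix.cramer_eq_adjugate_mulVec, Matrix.mulVec_mulVec, Matrix.adjugate_mul,
      Matrix.smul_mulVec, Matrix.one_mulVec]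
  have := congrFun hc none
  rw [hMv, map_neg] at this
  simpa [v] using this.symm

lemma mem_Dfeas_iff {m n : ℕ} (A : Matrix (Fin m) (Fin n) ℝ) (d x0 : Fin n → ℝ)
    (hx0 : ∀ j, 0 ≤ x0 j) (z : ℝ) (y : Fin n → ℝ) :
    y ∈ Dfeas A d x0 z ↔ A *ᵥ y = 0 ∧ ∀ j, - d j ≤ y j - x0 j * z ∧
      y j - x0 j * z ≤ (if x0 j = 0 then 0 else d j) := by
  refine and_congr_right fun _ => ⟨fun h j => ?_, fun h => ⟨fun j hj => ?_, fun j hj => ?_⟩⟩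
  · by_cases hj : x0 j = 0
    · simpa [hj] using h.1 j hj
    · have := h.2 j (lt_of_le_of_ne (hx0 j) (Ne.symm hj))
      rw [if_neg hj]
      constructor <;> linarith [this.1, this.2]
  · simpa [hj] using h j
  · have := h j
    rw [if_neg hj.ne'] at this
    constructor <;> linarith [this.1, this.2]

lemma exists_ext_opt {m n : ℕ} (A : Matrix (Fin m) (Fin n) ℝ) (c d x0 : Fin n → ℝ)
    (hx0 : ∀ j, 0 ≤ x0 j) (z : ℝ) (hne : (Dfeas A d x0 z).Nonempty) :
    ∃ y ∈ Dfeas A d x0 z, (∀ y' ∈ Dfeas A d x0 z, c ⬝ᵥ y' ≤ c ⬝ᵥ y) ∧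
      ∀ v, A *ᵥ v = 0 → (∀ j, (y j - x0 j * z = - d j ∨
        y j - x0 j * z = (if x0 j = 0 then 0 else d j)) → v j = 0) → v = 0 := by
  have hcc : Continuous (fun y : Fin n → ℝ => c ⬝ᵥ y) := by
    unfold dotProduct; fun_prop
  have hAc : Continuous (fun y : Fin n → ℝ => A *ᵥ y) := by fun_prop
  have hset : Dfeas A d x0 z = {y | A *ᵥ y = 0} ∩ Set.Icc (fun j => x0 j * z - d j)
      (fun j => x0 j * z + (if x0 j = 0 then 0 else d j)) := by
    ext y
    rw [mem_Dfeas_iff A d x0 hx0]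
    refine and_congr_right fun _ => ⟨fun h => ⟨fun j => ?_, fun j => ?_⟩, fun h j => ⟨?_, ?_⟩⟩
    · have := (h j).1; simp only; linarith
    · have := (h j).2; simp only; linarith
    · have := h.1 j; simp only at this; linarith
    · have := h.2 j; simp only at this; linarith
  have hcomp : IsCompact (Dfeas A d x0 z) := by
    rw [hset]
    exact isCompact_Icc.inter_left (isClosed_eq hAc continuous_const)
  obtain ⟨y0, hy0, hmax⟩ := hcomp.exists_isMaxOn hne hcc.continuousOn
  have hS : IsCompact (Dfeas A d x0 z ∩ {y | c ⬝ᵥ y = c ⬝ᵥ y0}) :=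
    hcomp.inter_right (isClosed_eq hcc continuous_const)
  obtain ⟨y, hy⟩ := hS.extremePoints_nonempty ⟨y0, hy0, rfl⟩
  rw [mem_extremePoints] at hy
  obtain ⟨⟨hyF, hyc⟩, hext⟩ := hy
  have hyc' : c ⬝ᵥ y = c ⬝ᵥ y0 := hyc
  have hopt : ∀ y' ∈ Dfeas A d x0 z, c ⬝ᵥ y' ≤ c ⬝ᵥ y := fun y' hy' => by
    rw [hyc']; exact hmax hy'
  refine ⟨y, hyF, hopt, fun v hv hvT => ?_⟩
  have hy' := (mem_Dfeas_iff A d x0 hx0 z y).1 hyF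
  obtain ⟨ε, hε, H⟩ := exists_eps (fun j => y j - x0 j * z) (fun j => - d j)
    (fun j => if x0 j = 0 then 0 else d j) v hy'.2 hvT
  have hfe : ∀ t : ℝ, |t| ≤ ε → y + t • v ∈ Dfeas A d x0 z := by
    intro t ht
    rw [mem_Dfeas_iff A d x0 hx0]
    refine ⟨by rw [Matrix.mulVec_add, Matrix.mulVec_smul, hv, hy'.1]; simp, fun j => ?_⟩
    have e : (y + t • v) j - x0 j * z = y j - x0 j * z + t * v j := by
      simp; ring
    rw [e]
    exact H t ht j
  have f1 := hfe ε (by rw [abs_of_pos hε])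
  have f2 := hfe (-ε) (by rw [abs_neg, abs_of_pos hε])
  have o1 := hopt _ f1
  have o2 := hopt _ f2
  simp only [dotProduct_add, dotProduct_smul, smul_eq_mul] at o1 o2
  have hcv : ε * (c ⬝ᵥ v) = 0 := by linarith
  have := (hext (y + ε • v) ⟨f1, by
      simp only [Set.mem_ofPred_eq, dotProduct_add, dotProduct_smul, smul_eq_mul]; linarith⟩
    (y + (-ε) • v) ⟨f2, by
      simp only [Set.mem_ofPred_eq, dotProduct_add, dotProduct_smul, smul_eq_mul]; linarith⟩
    ⟨1/2, 1/2, by norm_num, by norm_num, by norm_num, by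
      funext j; simp; ring⟩).1
  have h0 : ε • v = 0 := by simpa using this
  exact (smul_eq_zero.1 h0).resolve_left hε.ne'

/-- under total unimodularity and integrality, every turning coordinate of
`ψ` is a fraction `ς/σ` with `|σ| ≤ 2|J̄|x⁰_max` and `|ς| ≤ (n + |J̄|)d_max`. -/
theorem turning_coordinate_form {m n : ℕ} (A : Matrix (Fin m) (Fin n) ℝ)
    (c d x0 : Fin n → ℝ) (hd : ∀ j, 0 < d j) (hx0 : ∀ j, 0 ≤ x0 j)
    (hTU : TotUnimodular A)
    (hx0int : ∀ j, ∃ a : ℤ, x0 j = a) (hdint : ∀ j, ∃ a : ℤ, d j = a)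
    (Jbar : Finset (Fin n)) (hJbar : ∀ j, j ∈ Jbar ↔ 0 < x0 j) (hJne : Jbar.Nonempty)
    (xmax dmax : ℝ)
    (hxmax : IsGreatest (x0 '' {j | 0 < x0 j}) xmax)
    (hdmax : IsGreatest (Set.range d) dmax)
    (z₀ : ℝ)
    (hturn : ∃ ε₀ > 0, (∀ z ∈ Set.Icc (z₀ - ε₀) (z₀ + ε₀), (Dfeas A d x0 z).Nonempty) ∧
      ∀ ε > 0, ¬ ∃ a b : ℝ, ∀ z ∈ Set.Icc (z₀ - ε) (z₀ + ε),
        psi A c d x0 z = a * z + b) :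
    ∃ ς σ : ℤ, σ ≠ 0 ∧ z₀ = (ς : ℝ) / (σ : ℝ) ∧
      |(σ : ℝ)| ≤ 2 * (Jbar.card : ℝ) * xmax ∧
      |(ς : ℝ)| ≤ ((n : ℝ) + (Jbar.card : ℝ)) * dmax := by
  classical
  obtain ⟨ε₀, hε₀, hne, hna⟩ := hturn
  have hF0 : (Dfeas A d x0 z₀).Nonempty := hne z₀ ⟨by linarith, by linarith⟩
  obtain ⟨y, hyF, hymax, hyext⟩ := exists_ext_opt A c d x0 hx0 z₀ hF0
  set lo : Fin n → ℝ := fun j => - d j with hlo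
  set up : Fin n → ℝ := fun j => if x0 j = 0 then 0 else d j with hup
  set T : Fin n → Prop := fun j => y j - x0 j * z₀ = - d j ∨
    y j - x0 j * z₀ = (if x0 j = 0 then 0 else d j) with hT
  have hy' := (mem_Dfeas_iff A d x0 hx0 z₀ y).1 hyF
  have h2 : ¬ ∃ w, A *ᵥ w = 0 ∧ ∀ j, T j → w j = x0 j := by
    rintro ⟨w, hw, hwT⟩
    obtain ⟨ε, hε, H⟩ := exists_eps (fun j => y j - x0 j * z₀) lo up (fun j => w j - x0 j)
      hy'.2 (fun j hj => by rw [hwT j hj, sub_self])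
    have hfe : ∀ t : ℝ, |t| ≤ ε → y + t • w ∈ Dfeas A d x0 (z₀ + t) := by
      intro t ht
      rw [mem_Dfeas_iff A d x0 hx0]
      refine ⟨by rw [Matrix.mulVec_add, Matrix.mulVec_smul, hw, hy'.1]; simp, fun j => ?_⟩
      have e : (y + t • w) j - x0 j * (z₀ + t) = y j - x0 j * z₀ + t * (w j - x0 j) := by
        simp; ring
      rw [e]
      exact H t ht j
    refine hna ε hε ⟨c ⬝ᵥ w, c ⬝ᵥ y - z₀ * (c ⬝ᵥ w), fun z hz => ?_⟩
    have hz1 : |z - z₀| ≤ ε := by rw [abs_le]; constructor <;> linarith [hz.1, hz.2]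
    refine IsGreatest.csSup_eq ⟨⟨y + (z - z₀) • w, ?_, ?_⟩, ?_⟩
    · have := hfe _ hz1
      rwa [add_sub_cancel] at this
    · simp only [dotProduct_add, dotProduct_smul, smul_eq_mul]; ring
    · rintro _ ⟨y1, hy1, rfl⟩
      have hm := hfe (-(z - z₀)) (by rwa [abs_neg])
      have := hymax ((1/2 : ℝ) • (y1 + (y + (-(z - z₀)) • w))) (by
        rw [mem_Dfeas_iff A d x0 hx0] at hy1 hm ⊢
        refine ⟨by rw [Matrix.mulVec_smul, Matrix.mulVec_add, hy1.1, hm.1]; simp, fun j => ?_⟩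
        have a1 := hy1.2 j
        have a2 := hm.2 j
        simp only [Pi.smul_apply, Pi.add_apply, smul_eq_mul] at a1 a2 ⊢
        constructor <;> linarith [a1.1, a1.2, a2.1, a2.2])
      simp only [dotProduct_add, dotProduct_smul, smul_eq_mul] at this ⊢
      linarith
  obtain ⟨D, hD, hne0, heq⟩ := algebra_part A hTU x0 y z₀ T hy'.1 hyext h2
  choose xi hxi using hx0int
  choose di hdi using hdint
  have hs : ∀ j, ∃ a : ℤ, (if T j then y j - x0 j * z₀ else 0) = a ∧ |(a : ℝ)| ≤ dmax := by
    intro j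
    have hdj : d j ≤ dmax := hdmax.2 ⟨j, rfl⟩
    have hpos := hd j
    by_cases hj : T j
    · rw [if_pos hj]
      rcases hj with hj | hj
      · refine ⟨- di j, by rw [hj, hdi]; simp, ?_⟩
        push_cast
        rw [← hdi, abs_neg, abs_of_pos hpos]; exact hdj
      · rw [hj]
        split_ifs
        · exact ⟨0, by simp, by simp; linarith⟩
        · exact ⟨di j, hdi j, by rw [← hdi, abs_of_pos hpos]; exact hdj⟩
    · rw [if_neg hj]
      exact ⟨0, by simp, by simp; linarith⟩
  choose si hsi hsi' using hs
  have hσ : ((∑ j, (if T j then xi j else 0) * D j : ℤ) : ℝ) =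
      ∑ j, (if T j then x0 j else 0) * (D j : ℝ) := by
    push_cast
    refine Finset.sum_congr rfl fun j _ => ?_
    congr 1
    split_ifs
    · exact (hxi j).symm
    · rfl
  have hς : ((- ∑ j, si j * D j : ℤ) : ℝ) =
      - ∑ j, (if T j then y j - x0 j * z₀ else 0) * (D j : ℝ) := by
    push_cast
    congr 1
    refine Finset.sum_congr rfl fun j _ => ?_
    rw [hsi j]
  have hxm0 : 0 ≤ xmax := by
    obtain ⟨j, hj⟩ := hJne
    exact (hx0 j).trans (hxmax.2 ⟨j, (hJbar j).1 hj, rfl⟩)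
  have hdm0 : 0 ≤ dmax := by
    obtain ⟨j, hj⟩ := hJne
    exact (hd j).le.trans (hdmax.2 ⟨j, rfl⟩)
  refine ⟨- ∑ j, si j * D j, ∑ j, (if T j then xi j else 0) * D j, ?_, ?_, ?_, ?_⟩
  · intro h
    rw [h] at hσ
    exact hne0 (by rw [← hσ]; simp)
  · rw [hσ, hς, eq_div_iff hne0, mul_comm]
    exact heq
  · rw [hσ]
    have : ∑ j, (if T j then x0 j else 0) * (D j : ℝ) =
        ∑ j ∈ Jbar, (if T j then x0 j else 0) * (D j : ℝ) := by
      symm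
      refine Finset.sum_subset (Finset.subset_univ _) fun j _ hj => ?_
      have : x0 j = 0 := le_antisymm (not_lt.1 fun h => hj ((hJbar j).2 h)) (hx0 j)
      simp [this]
    rw [this]
    have hb : |∑ j ∈ Jbar, (if T j then x0 j else 0) * (D j : ℝ)| ≤ ∑ _j ∈ Jbar, xmax := by
      refine (Finset.abs_sum_le_sum_abs _ _).trans (Finset.sum_le_sum fun j hj => ?_)
      rw [abs_mul]
      have hxj : |(if T j then x0 j else 0)| ≤ xmax := by
        split_ifs
        · rw [abs_of_nonneg (hx0 j)]
          exact hxmax.2 ⟨j, (hJbar j).1 hj, rfl⟩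
        · simpa using hxm0
      calc _ ≤ xmax * 1 := mul_le_mul hxj (hD j) (abs_nonneg _) hxm0
        _ = xmax := mul_one _
    rw [Finset.sum_const, nsmul_eq_mul] at hb
    have : 0 ≤ (Jbar.card : ℝ) * xmax := by positivity
    linarith
  · have hb : |∑ j, (si j : ℝ) * (D j : ℝ)| ≤ ∑ _j : Fin n, dmax := by
      refine (Finset.abs_sum_le_sum_abs _ _).trans (Finset.sum_le_sum fun j hj => ?_)
      rw [abs_mul]
      calc _ ≤ dmax * 1 := mul_le_mul (hsi' j) (hD j) (abs_nonneg _) hdm0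
        _ = dmax := mul_one _
    rw [Finset.sum_const, nsmul_eq_mul, Finset.card_univ, Fintype.card_fin] at hb
    have : 0 ≤ (Jbar.card : ℝ) * dmax := by positivity
    push_cast
    rw [abs_neg]
    linarith
end

section
/- Suppose A is totally unimodular, x⁰ and d are integer vectors, and J̄ ≠ ∅. If z_l < 0 is the left break point of ψ, i.e. F(z) = ∅ for every z < z_l and F(z) ≠ ∅ for every z ∈ [z_l, 0], then there exist integers ς and σ with σ ≠ 0 such that z_l = ς/σ, |σ| ≤ 2·|J̄|·x⁰_max, and |ς| ≤ (n + |J̄|)·d_max. -/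
open Matrix BigOperators

theorem exists_minor_aux {m n k : ℕ} (A : Matrix (Fin m) (Fin n) ℝ) (g : Fin k → Fin n)
    (hg : LinearIndependent ℝ (fun c => A.col (g c))) :
    ∃ f : Fin k → Fin m, (A.submatrix f g).det ≠ 0 := by
  have h1 : (A.submatrix id g)ᵀ.rank = k := by
    have : LinearIndependent ℝ (A.submatrix id g)ᵀ.row := hg
    simpa using this.rank_matrix
  rw [Matrix.rank_transpose, Matrix.rank_eq_finrank_span_row] at h1
  obtain ⟨f, hf, -, hli⟩ := Submodule.exists_fun_fin_finrank_span_eq ℝ (Set.range (A.submatrix id g).row)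
  generalize Module.finrank ℝ (Submodule.span ℝ (Set.range (A.submatrix id g).row)) = r
    at h1 f hf hli
  subst h1
  choose f' hf' using hf
  refine ⟨f', ?_⟩
  have : LinearIndependent ℝ (A.submatrix f' g).row := by
    have hff : (A.submatrix f' g).row = f := by
      ext i j
      rw [← hf' i]
      rfl
    rw [hff]
    exact hli
  rw [Matrix.linearIndependent_rows_iff_isUnit, Matrix.isUnit_iff_isUnit_det] at this
  exact this.ne_zero

theorem coef_aux {m n k : ℕ} (A : Matrix (Fin m) (Fin n) ℝ) (hTU : TotUnimodular A)
    (g : Fin k → Fin n) (hg : LinearIndependent ℝ (fun c => A.col (g c)))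
    (j : Fin n) (l : Fin k → ℝ) (hl : ∑ c, l c • A.col (g c) = A.col j) (c : Fin k) :
    l c = 0 ∨ l c = 1 ∨ l c = -1 := by
  obtain ⟨f, hf⟩ := exists_minor_aux A g hg
  have h1 : (A.submatrix f g) *ᵥ l = fun i => A (f i) j := by
    ext i
    have := congrFun hl (f i)
    simp only [Finset.sum_apply, Pi.smul_apply, smul_eq_mul, Matrix.col_apply] at this
    rw [← this]
    simp [Matrix.mulVec, dotProduct, mul_comm]
  have h2 : Matrix.cramer (A.submatrix f g) (fun i => A (f i) j) c
      = (A.submatrix f g).det * l c := by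
    rw [← h1, Matrix.cramer_eq_adjugate_mulVec, Matrix.mulVec_mulVec, Matrix.adjugate_mul]
    simp [Matrix.smul_mulVec]
  rw [Matrix.cramer_apply] at h2
  have h3 : (A.submatrix f g).updateCol c (fun i => A (f i) j)
      = A.submatrix f (Function.update g c j) := by
    ext a b
    by_cases hb : b = c
    · subst hb; simp
    · simp [hb]
  rw [h3] at h2
  rcases hTU k f g with h | h | h
  · exact absurd h hf
  · rw [h, one_mul] at h2; rw [← h2]; exact hTU k f _
  · rw [h] at h2
    rcases hTU k f (Function.update g c j) with h' | h' | h' <;> rw [h'] at h2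
    · left; linarith
    · right; right; linarith
    · right; left; linarith

theorem elem_aux {m n : ℕ} (A : Matrix (Fin m) (Fin n) ℝ) (hTU : TotUnimodular A)
    (φ : (Fin m → ℝ) →ₗ[ℝ] ℝ) (i0 : Fin n)
    (hmin : ∀ ψ : (Fin m → ℝ) →ₗ[ℝ] ℝ, (∀ j, φ (A.col j) = 0 → ψ (A.col j) = 0) →
      ψ (A.col i0) = 0 → ∀ j, ψ (A.col j) = 0) (j : Fin n) :
    φ (A.col j) = 0 ∨ φ (A.col j) = φ (A.col i0) ∨ φ (A.col j) = - φ (A.col i0) := by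
  let S : Set (Fin n) := {j | φ (A.col j) = 0 ∨ j = i0}
  obtain ⟨κ, a, ha, hsp, hli⟩ := exists_linearIndependent' ℝ (fun s : S => A.col s)
  have : Finite κ := Finite.of_injective a ha
  obtain ⟨k, ⟨e⟩⟩ := Finite.exists_equiv_fin κ
  let g : Fin k → Fin n := fun c => (a (e.symm c) : Fin n)
  have hg : LinearIndependent ℝ (fun c => A.col (g c)) := hli.comp e.symm e.symm.injective
  have hginj : Function.Injective g := fun x y h => e.symm.injective (ha (Subtype.ext h))
  have hgS : ∀ c, φ (A.col (g c)) = 0 ∨ g c = i0 := fun c => (a (e.symm c)).2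
  have hspan : A.col j ∈ Submodule.span ℝ (Set.range (fun c => A.col (g c))) := by
    have hr : Set.range (fun c => A.col (g c)) = Set.range ((fun s : S => A.col s) ∘ a) := by
      have : (fun c => A.col (g c)) = ((fun s : S => A.col s) ∘ a) ∘ e.symm := rfl
      rw [this, e.symm.surjective.range_comp]
    rw [hr, hsp]
    by_contra hn
    obtain ⟨ψ, h1, h2⟩ := Submodule.exists_le_ker_of_notMem hn
    refine h1 (hmin ψ (fun j' hj' => ?_) ?_ j)
    · exact h2 (Submodule.subset_span ⟨⟨j', Or.inl hj'⟩, rfl⟩)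
    · exact h2 (Submodule.subset_span ⟨⟨i0, Or.inr rfl⟩, rfl⟩)
  obtain ⟨l, hl⟩ := (Submodule.mem_span_range_iff_exists_fun ℝ).1 hspan
  have hφ : φ (A.col j) = ∑ c, l c * φ (A.col (g c)) := by
    rw [← hl]; simp
  by_cases hex : ∃ c, g c = i0
  · obtain ⟨c, hc⟩ := hex
    rw [Finset.sum_eq_single c, hc] at hφ
    · rcases coef_aux A hTU g hg j l hl c with h | h | h <;> rw [h] at hφ <;> simp [hφ]
    · intro b _ hb
      rcases hgS b with h | h
      · simp [h]
      · exact absurd (hginj (h.trans hc.symm)) hb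
    · simp
  · left
    rw [hφ]
    refine Finset.sum_eq_zero fun c _ => ?_
    rcases hgS c with h | h
    · simp [h]
    · exact absurd ⟨c, h⟩ hex

/-- move along `-v` until a coordinate of `w` vanishes. -/
theorem move_aux {n : ℕ} (w v : Fin n → ℝ) (hs : ∀ j, w j = 0 → v j = 0)
    (hj : ∃ j, 0 < w j * v j) :
    ∃ t : ℝ, 0 < t ∧ (∀ j, (0 ≤ w j → 0 ≤ w j - t * v j) ∧ (w j ≤ 0 → w j - t * v j ≤ 0)) ∧
      ∃ j, w j ≠ 0 ∧ w j - t * v j = 0 := by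
  obtain ⟨j0, hj0⟩ := hj
  obtain ⟨j, hjm, hmin⟩ := Finset.exists_min_image (Finset.univ.filter (fun j => 0 < w j * v j))
    (fun j => w j / v j) ⟨j0, by simpa using hj0⟩
  simp only [Finset.mem_filter, Finset.mem_univ, true_and] at hjm hmin
  have hv : v j ≠ 0 := fun h => by simp [h] at hjm
  have hw : w j ≠ 0 := fun h => by simp [h] at hjm
  have ht : 0 < w j / v j := by
    have : w j / v j = (w j * v j) / (v j)^2 := by field_simp
    rw [this]; positivity
  refine ⟨w j / v j, ht, fun i => ?_, j, hw, by field_simp; simp⟩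
  set t := w j / v j
  have key : 0 < w i * v i → t * (v i)^2 ≤ w i * v i := by
    intro h
    have hvi : v i ≠ 0 := fun h' => by simp [h'] at h
    have := hmin i h
    calc t * (v i)^2 ≤ (w i / v i) * (v i)^2 := by gcongr
      _ = _ := by field_simp
  constructor
  · intro h
    rcases h.eq_or_lt with h | h
    · rw [hs i h.symm, ← h]; simp
    · by_cases hvi : 0 < v i
      · have := key (mul_pos h hvi); nlinarith
      · nlinarith
  · intro h
    rcases h.eq_or_lt with h | h
    · rw [hs i h, h]; simp
    · by_cases hvi : v i < 0
      · have := key (mul_pos_of_neg_of_neg h hvi); nlinarith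
      · nlinarith

theorem conf_aux {m n : ℕ} (A : Matrix (Fin m) (Fin n) ℝ) (hTU : TotUnimodular A)
    (y : Fin n → ℝ) (N : ℕ) : ∀ (φ : (Fin m → ℝ) →ₗ[ℝ] ℝ),
    (Finset.univ.filter (fun j => φ (A.col j) ≠ 0)).card ≤ N →
    0 < ∑ j, φ (A.col j) * y j →
    ∃ (ψ : (Fin m → ℝ) →ₗ[ℝ] ℝ) (s : Fin n → SignType), (∀ j, ψ (A.col j) = (s j : ℝ)) ∧
      (∀ j, (0 ≤ φ (A.col j) → 0 ≤ ψ (A.col j)) ∧ (φ (A.col j) ≤ 0 → ψ (A.col j) ≤ 0)) ∧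
      0 < ∑ j, ψ (A.col j) * y j := by
  induction N with
  | zero =>
    intro φ hc hpos
    exfalso
    have : ∀ j, φ (A.col j) = 0 := by simpa [Finset.filter_eq_empty_iff] using hc
    simp [this] at hpos
  | succ N ih =>
    intro φ hc hpos
    -- reduction step
    have red : ∀ χ : (Fin m → ℝ) →ₗ[ℝ] ℝ,
        (∀ j, (0 ≤ φ (A.col j) → 0 ≤ χ (A.col j)) ∧ (φ (A.col j) ≤ 0 → χ (A.col j) ≤ 0)) →
        (∃ j, φ (A.col j) ≠ 0 ∧ χ (A.col j) = 0) → 0 < ∑ j, χ (A.col j) * y j →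
        ∃ (ψ : (Fin m → ℝ) →ₗ[ℝ] ℝ) (s : Fin n → SignType), (∀ j, ψ (A.col j) = (s j : ℝ)) ∧
        (∀ j, (0 ≤ φ (A.col j) → 0 ≤ ψ (A.col j)) ∧ (φ (A.col j) ≤ 0 → ψ (A.col j) ≤ 0)) ∧
        0 < ∑ j, ψ (A.col j) * y j := by
      rintro χ h1 ⟨i, hi, hi'⟩ h3
      have hlt : (Finset.univ.filter (fun j => χ (A.col j) ≠ 0)).card <
          (Finset.univ.filter (fun j => φ (A.col j) ≠ 0)).card := by
        apply Finset.card_lt_card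
        rw [Finset.ssubset_iff_of_subset]
        · exact ⟨i, by simpa using hi, by simpa using hi'⟩
        · intro j
          simp only [Finset.mem_filter, Finset.mem_univ, true_and]
          intro hj h0
          exact hj (le_antisymm ((h1 j).2 h0.le) ((h1 j).1 h0.ge))
      obtain ⟨ψ, s, a, b, c⟩ := ih χ (by omega) h3
      exact ⟨ψ, s, a, fun j => ⟨fun h => (b j).1 ((h1 j).1 h), fun h => (b j).2 ((h1 j).2 h)⟩, c⟩
    have step : ∀ χ : (Fin m → ℝ) →ₗ[ℝ] ℝ, (∀ j, φ (A.col j) = 0 → χ (A.col j) = 0) →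
        (∃ j, 0 < φ (A.col j) * χ (A.col j)) → ∑ j, χ (A.col j) * y j ≤ 0 →
        ∃ (ψ : (Fin m → ℝ) →ₗ[ℝ] ℝ) (s : Fin n → SignType), (∀ j, ψ (A.col j) = (s j : ℝ)) ∧
        (∀ j, (0 ≤ φ (A.col j) → 0 ≤ ψ (A.col j)) ∧ (φ (A.col j) ≤ 0 → ψ (A.col j) ≤ 0)) ∧
        0 < ∑ j, ψ (A.col j) * y j := by
      intro χ h1 h2 h3
      obtain ⟨t, ht, hc1, hc2⟩ := move_aux (fun j => φ (A.col j)) (fun j => χ (A.col j)) h1 h2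
      refine red (φ - t • χ) (by simpa using hc1) (by simpa using hc2) ?_
      have : ∑ j, (φ - t • χ) (A.col j) * y j
          = ∑ j, φ (A.col j) * y j - t * ∑ j, χ (A.col j) * y j := by
        rw [Finset.mul_sum, ← Finset.sum_sub_distrib]
        refine Finset.sum_congr rfl fun j _ => ?_
        simp; ring
      rw [this]; nlinarith
    obtain ⟨i0, hi0⟩ : ∃ i0, φ (A.col i0) ≠ 0 := by
      by_contra h
      push Not at h
      simp [h] at hpos
    by_cases hmin : ∀ ψ : (Fin m → ℝ) →ₗ[ℝ] ℝ, (∀ j, φ (A.col j) = 0 → ψ (A.col j) = 0) →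
      ψ (A.col i0) = 0 → ∀ j, ψ (A.col j) = 0
    · have hel := elem_aux A hTU φ i0 hmin
      have hp : 0 < |φ (A.col i0)| := abs_pos.2 hi0
      have hval : ∀ j, (|φ (A.col i0)|⁻¹ • φ) (A.col j) = (SignType.sign (φ (A.col j)) : ℝ) := by
        intro j
        simp only [LinearMap.smul_apply, smul_eq_mul]
        have habs : φ (A.col j) = 0 ∨ |φ (A.col j)| = |φ (A.col i0)| := by
          rcases hel j with h | h | h
          · exact Or.inl h
          · right; rw [h]
          · right; rw [h, abs_neg]
        rcases habs with h | h
        · simp [h]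
        · rw [← h] at hp ⊢
          rw [inv_mul_eq_iff_eq_mul₀ hp.ne', mul_comm]
          exact (sign_mul_abs _).symm
      refine ⟨|φ (A.col i0)|⁻¹ • φ, fun j => SignType.sign (φ (A.col j)), hval, fun j => ?_, ?_⟩
      · simp only [LinearMap.smul_apply, smul_eq_mul]
        exact ⟨fun h => by positivity,
          fun h => mul_nonpos_of_nonneg_of_nonpos (by positivity) h⟩
      · have : ∑ j, (|φ (A.col i0)|⁻¹ • φ) (A.col j) * y j
            = |φ (A.col i0)|⁻¹ * ∑ j, φ (A.col j) * y j := by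
          rw [Finset.mul_sum]
          refine Finset.sum_congr rfl fun j _ => ?_
          simp; ring
        rw [this]; positivity
    · push Not at hmin
      obtain ⟨χ, hχ, hχ0, j, hj⟩ := hmin
      -- choose the sign
      have main : ∀ χ : (Fin m → ℝ) →ₗ[ℝ] ℝ, (∀ j, φ (A.col j) = 0 → χ (A.col j) = 0) →
          χ (A.col i0) = 0 → (∃ j, χ (A.col j) ≠ 0) → ∑ j, χ (A.col j) * y j ≤ 0 →
          ∃ (ψ : (Fin m → ℝ) →ₗ[ℝ] ℝ) (s : Fin n → SignType), (∀ j, ψ (A.col j) = (s j : ℝ)) ∧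
          (∀ j, (0 ≤ φ (A.col j) → 0 ≤ ψ (A.col j)) ∧ (φ (A.col j) ≤ 0 → ψ (A.col j) ≤ 0)) ∧
          0 < ∑ j, ψ (A.col j) * y j := by
        rintro χ h1 h2 ⟨j, hj⟩ h3
        by_cases hex : ∃ j, 0 < φ (A.col j) * χ (A.col j)
        · exact step χ h1 hex h3
        · push Not at hex
          have hneg : ∑ j, (-χ) (A.col j) * y j = - ∑ j, χ (A.col j) * y j := by
            simp
          rcases h3.eq_or_lt with h3 | h3
          · refine step (-χ) (by simpa using h1) ⟨j, ?_⟩ (by rw [hneg, h3]; simp)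
            have hφj : φ (A.col j) ≠ 0 := fun h => hj (h1 j h)
            have := lt_of_le_of_ne (hex j) (mul_ne_zero hφj hj)
            simp only [LinearMap.neg_apply]; linarith
          · refine red (-χ) (fun i => ?_) ⟨i0, hi0, by simp [h2]⟩ (by rw [hneg]; linarith)
            have := hex i
            have h1i := h1 i
            simp only [LinearMap.neg_apply]
            constructor
            · intro h
              rcases h.eq_or_lt with h | h
              · simp [h1i h.symm]
              · nlinarith
            · intro h
              rcases h.eq_or_lt with h | h
              · simp [h1i h]
              · nlinarith
      rcases le_total (∑ j, χ (A.col j) * y j) 0 with h | h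
      · exact main χ hχ hχ0 ⟨j, hj⟩ h
      · exact main (-χ) (by simpa using hχ) (by simpa using hχ0) ⟨j, by simpa using hj⟩
          (by simpa using h)

theorem apply_mulVec_aux {m n : ℕ} (A : Matrix (Fin m) (Fin n) ℝ)
    (φ : (Fin m → ℝ) →ₗ[ℝ] ℝ) (y : Fin n → ℝ) :
    φ (A.mulVec y) = ∑ j, φ (A.col j) * y j := by
  have : A.mulVec y = ∑ j, y j • A.col j := by
    ext i
    simp [Matrix.mulVec, dotProduct, mul_comm]
  rw [this]
  simp [mul_comm]

/-- the constant part contributed by one coordinate. -/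
def btAux (d e : ℤ) : SignType → ℤ
  | .pos => d
  | .neg => e
  | .zero => 0

theorem farkas_aux_s12 {m n : ℕ} (A : Matrix (Fin m) (Fin n) ℝ) (hTU : TotUnimodular A)
    (x0 : Fin n → ℝ) (d e : Fin n → ℤ) (hd : ∀ j, 0 < d j) (he : ∀ j, 0 ≤ e j) (z : ℝ)
    (hemp : ¬ ∃ y : Fin n → ℝ, A.mulVec y = 0 ∧
      ∀ j, x0 j * z - d j ≤ y j ∧ y j ≤ x0 j * z + e j) :
    ∃ (ψ : (Fin m → ℝ) →ₗ[ℝ] ℝ) (s : Fin n → SignType), (∀ j, ψ (A.col j) = (s j : ℝ)) ∧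
      0 < ∑ j, ((s j : ℝ) * x0 j * z - btAux (d j) (e j) (s j)) := by
  let K : Set (Fin n → ℝ) := Set.Icc (fun j => x0 j * z - d j) (fun j => x0 j * z + e j)
  have hK : IsCompact (A.mulVecLin '' K) :=
    isCompact_Icc.image A.mulVecLin.continuous_of_finiteDimensional
  have hKc : Convex ℝ (A.mulVecLin '' K) := (convex_Icc _ _).linear_image _
  have h0 : (0 : Fin m → ℝ) ∉ A.mulVecLin '' K := by
    rintro ⟨y, hy, hy0⟩
    exact hemp ⟨y, hy0, fun j => ⟨hy.1 j, hy.2 j⟩⟩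
  obtain ⟨f, u, hu, hf⟩ := geometric_hahn_banach_point_closed hKc hK.isClosed h0
  let φ : (Fin m → ℝ) →ₗ[ℝ] ℝ := f.toLinearMap
  let y : Fin n → ℝ := fun j => if 0 ≤ φ (A.col j) then x0 j * z - d j else x0 j * z + e j
  have hdr : ∀ j, (0 : ℝ) < d j := fun j => by exact_mod_cast hd j
  have her : ∀ j, (0 : ℝ) ≤ e j := fun j => by exact_mod_cast he j
  have hyK : y ∈ K := by
    constructor <;> intro j <;> have := hdr j <;> have := her j <;> simp only [y] <;>
      split_ifs <;> linarith
  have hpos : 0 < ∑ j, φ (A.col j) * y j := by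
    rw [← apply_mulVec_aux]
    have := hf _ ⟨y, hyK, rfl⟩
    rw [map_zero] at hu
    exact hu.trans this
  obtain ⟨ψ, s, h1, h2, h3⟩ := conf_aux A hTU y _ φ le_rfl hpos
  refine ⟨ψ, s, h1, ?_⟩
  convert h3 using 2 with j
  have h2j := h2 j
  rw [h1 j] at h2j ⊢
  simp only [y]
  rcases hs : s j with _ | _ | _
  · simp [btAux]
  · rw [hs] at h2j
    have : ¬ 0 ≤ φ (A.col j) := fun h => by
      have := h2j.1 h
      norm_num at this
    simp [btAux, this]
    ring
  · rw [hs] at h2j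
    have : 0 ≤ φ (A.col j) := by
      by_contra h
      have := h2j.2 (not_le.1 h).le
      norm_num at this
    simp [btAux, this]

theorem feas_aux {m n : ℕ} (A : Matrix (Fin m) (Fin n) ℝ)
    (x0 : Fin n → ℝ) (d e : Fin n → ℤ) (z : ℝ) (y : Fin n → ℝ) (hy : A.mulVec y = 0)
    (hb : ∀ j, x0 j * z - d j ≤ y j ∧ y j ≤ x0 j * z + e j)
    (ψ : (Fin m → ℝ) →ₗ[ℝ] ℝ) (s : Fin n → SignType) (hs : ∀ j, ψ (A.col j) = (s j : ℝ)) :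
    ∑ j, ((s j : ℝ) * x0 j * z - btAux (d j) (e j) (s j)) ≤ 0 := by
  have h0 := apply_mulVec_aux A ψ y
  rw [hy, map_zero] at h0
  rw [h0]
  refine Finset.sum_le_sum fun j _ => ?_
  rw [hs j]
  have := hb j
  rcases s j with _ | _ | _
  · simp [btAux]
  · simp [btAux]; linarith
  · simp [btAux]; linarith

/-- under total unimodularity and integrality, the left break point `z_l`
is a fraction `ς/σ` with `|σ| ≤ 2|J̄|x⁰_max` and `|ς| ≤ (n + |J̄|)d_max`. -/
theorem left_break_point_form {m n : ℕ} (A : Matrix (Fin m) (Fin n) ℝ)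
    (c d x0 : Fin n → ℝ) (hd : ∀ j, 0 < d j) (hx0 : ∀ j, 0 ≤ x0 j)
    (hTU : TotUnimodular A)
    (hx0int : ∀ j, ∃ a : ℤ, x0 j = a) (hdint : ∀ j, ∃ a : ℤ, d j = a)
    (Jbar : Finset (Fin n)) (hJbar : ∀ j, j ∈ Jbar ↔ 0 < x0 j) (hJne : Jbar.Nonempty)
    (xmax dmax : ℝ)
    (hxmax : IsGreatest (x0 '' {j | 0 < x0 j}) xmax)
    (hdmax : IsGreatest (Set.range d) dmax)
    (zl : ℝ) (hzl : zl < 0)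
    (hleft : ∀ z : ℝ, z < zl → Dfeas A d x0 z = ∅)
    (hright : ∀ z ∈ Set.Icc zl 0, (Dfeas A d x0 z).Nonempty) :
    ∃ ς σ : ℤ, σ ≠ 0 ∧ zl = (ς : ℝ) / (σ : ℝ) ∧
      |(σ : ℝ)| ≤ 2 * (Jbar.card : ℝ) * xmax ∧
      |(ς : ℝ)| ≤ ((n : ℝ) + (Jbar.card : ℝ)) * dmax := by
  
  classical
  choose xI hxI using hx0int
  choose dI hdI using hdint
  let e : Fin n → ℤ := fun j => if x0 j = 0 then 0 else dI j
  have hdI0 : ∀ j, 0 < dI j := fun j => by have := hd j; rw [hdI j] at this; exact_mod_cast this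
  have he0 : ∀ j, 0 ≤ e j := fun j => by
    simp only [e]; split_ifs
    · exact le_rfl
    · exact (hdI0 j).le
  have hed : ∀ j, e j ≤ dI j := fun j => by
    simp only [e]; split_ifs
    · exact (hdI0 j).le
    · exact le_rfl
  have hfe : ∀ z y, y ∈ Dfeas A d x0 z ↔ (A.mulVec y = 0 ∧
      ∀ j, x0 j * z - dI j ≤ y j ∧ y j ≤ x0 j * z + e j) := by
    intro z y
    simp only [Dfeas, Set.mem_ofPred_eq]
    refine and_congr_right fun _ => ⟨fun h j => ?_, fun h => ⟨fun j hj => ?_, fun j hj => ?_⟩⟩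
    · rcases (hx0 j).eq_or_lt with hj | hj
      · have := h.1 j hj.symm
        simp only [e, ← hj, ← hdI j]
        simpa using this
      · have := h.2 j hj
        simp only [e, hj.ne', ← hdI j]
        simpa [← hdI j] using this
    · have := h j
      simp only [e, hj, ← hdI j] at this
      simpa using this
    · have := h j
      simp only [e, hj.ne', ← hdI j] at this
      simpa [← hdI j] using this
  let a : (Fin n → SignType) → ℤ := fun s => ∑ j, (s j : ℤ) * xI j
  let b : (Fin n → SignType) → ℤ := fun s => ∑ j, btAux (dI j) (e j) (s j)
  have hsum : ∀ s z, ∑ j, ((s j : ℝ) * x0 j * z - btAux (dI j) (e j) (s j))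
      = (a s : ℝ) * z - b s := by
    intro s z
    simp only [a, b]
    push_cast
    rw [Finset.sum_sub_distrib, Finset.sum_mul]
    congr 1
    refine Finset.sum_congr rfl fun j _ => ?_
    rw [hxI j]
  have hbt : ∀ (s : Fin n → SignType) (j : Fin n), 0 ≤ btAux (dI j) (e j) (s j) ∧ btAux (dI j) (e j) (s j) ≤ dI j := by
    intro s j
    have := hdI0 j
    have := he0 j
    have := hed j
    rcases s j with _ | _ | _ <;> simp only [btAux] <;> constructor <;> omega
  have hb0 : ∀ s, 0 ≤ b s := fun s => Finset.sum_nonneg fun j _ => (hbt s j).1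
  obtain ⟨s, has, hs⟩ : ∃ s, a s ≠ 0 ∧ (a s : ℝ) * zl = b s := by
    by_contra hcon
    push Not at hcon
    obtain ⟨y, hy⟩ := hright zl ⟨le_rfl, hzl.le⟩
    have hy' := (hfe _ _).1 hy
    have hev : ∀ᶠ z in nhdsWithin zl (Set.Iio zl), ∀ s : Fin n → SignType,
        (∃ ψ : (Fin m → ℝ) →ₗ[ℝ] ℝ, ∀ j, ψ (A.col j) = (s j : ℝ)) → (a s : ℝ) * z - b s ≤ 0 := by
      rw [Filter.eventually_all]
      intro s
      by_cases hψ : ∃ ψ : (Fin m → ℝ) →ₗ[ℝ] ℝ, ∀ j, ψ (A.col j) = (s j : ℝ)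
      · obtain ⟨ψ, hψ⟩ := hψ
        have h1 := feas_aux A x0 dI e zl y hy'.1 hy'.2 ψ s hψ
        rw [hsum] at h1
        by_cases has : a s = 0
        · refine Filter.Eventually.of_forall fun z _ => ?_
          have : (0 : ℝ) ≤ b s := by exact_mod_cast hb0 s
          rw [has]; simpa using this
        · have h2 : (a s : ℝ) * zl - b s < 0 :=
            lt_of_le_of_ne h1 (fun h => hcon s has (sub_eq_zero.1 h))
          have hc : Continuous fun z : ℝ => (a s : ℝ) * z - b s := by fun_prop
          filter_upwards [nhdsWithin_le_nhds (hc.tendsto zl (Iio_mem_nhds h2))] with z hz _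
          exact le_of_lt hz
      · exact Filter.Eventually.of_forall fun z h => absurd h hψ
    obtain ⟨z, hz, hzlt⟩ := (hev.and self_mem_nhdsWithin).exists
    obtain ⟨ψ, s, h1, h2⟩ := farkas_aux_s12 A hTU x0 dI e hdI0 he0 z (by
      rintro ⟨y, hy⟩
      have := (hfe z y).2 hy
      rw [hleft z hzlt] at this
      exact this)
    rw [hsum] at h2
    exact absurd (hz s ⟨ψ, h1⟩) (not_le.2 h2)
  have hasr : (a s : ℝ) ≠ 0 := by exact_mod_cast has
  have hxm0 : 0 < xmax := by
    obtain ⟨j, hj, hjx⟩ := hxmax.1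
    rw [← hjx]; exact hj
  have hdm0 : 0 < dmax := by
    obtain ⟨j, hjx⟩ := hdmax.1
    rw [← hjx]; exact hd j
  refine ⟨b s, a s, has, by rw [eq_div_iff hasr, mul_comm]; exact hs, ?_, ?_⟩
  · have h1 : |(a s : ℝ)| ≤ ∑ j, x0 j := by
      simp only [a]
      push_cast
      refine (Finset.abs_sum_le_sum_abs _ _).trans (Finset.sum_le_sum fun j _ => ?_)
      rw [← hxI j, abs_mul, abs_of_nonneg (hx0 j)]
      have := hx0 j
      rcases s j with _ | _ | _ <;> simp <;> exact this
    have h2 : ∑ j, x0 j = ∑ j ∈ Jbar, x0 j := by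
      symm
      refine Finset.sum_subset (Finset.subset_univ _) fun j _ hj => ?_
      rw [hJbar] at hj
      exact le_antisymm (not_lt.1 hj) (hx0 j)
    have h3 : ∑ j ∈ Jbar, x0 j ≤ Jbar.card * xmax := by
      rw [← nsmul_eq_mul]
      exact Finset.sum_le_card_nsmul _ _ _ fun j hj => hxmax.2 ⟨j, (hJbar j).1 hj, rfl⟩
    have : 0 ≤ (Jbar.card : ℝ) * xmax := by positivity
    nlinarith
  · have h1 : |(b s : ℝ)| ≤ n * dmax := by
      rw [abs_of_nonneg (by exact_mod_cast hb0 s)]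
      have : (b s : ℝ) ≤ ∑ j : Fin n, dmax := by
        simp only [b]
        push_cast
        refine Finset.sum_le_sum fun j _ => ?_
        have h1 : (btAux (dI j) (e j) (s j) : ℝ) ≤ dI j := by exact_mod_cast (hbt s j).2
        exact h1.trans (by rw [← hdI j]; exact hdmax.2 ⟨j, rfl⟩)
      simpa using this
    have : 0 ≤ (Jbar.card : ℝ) * dmax := by positivity
    linarith
end

section
/- Let δ = c_{J̄}·x⁰_{J̄} − K and suppose F(z) ≠ ∅ for every z ∈ ℝ. Let ẑ ∈ ℝ and suppose there exist ε > 0 and real numbers k⁻, k⁺ such that ψ(z) = ψ(ẑ) + k⁻·(z − ẑ) for all z ∈ [ẑ − ε, ẑ], ψ(z) = ψ(ẑ) + k⁺·(z − ẑ) for all z ∈ [ẑ, ẑ + ε], and k⁺ ≤ δ ≤ k⁻. If ȳ ∈ F(ẑ) satisfies c·ȳ = ψ(ẑ), then for every z ∈ ℝ and every y ∈ F(z) one has c·y − δ·z ≤ c·ȳ − δ·ẑ; that is, (ȳ, ẑ) is an optimal solution of the problem of maximizing c·y + (K − c_{J̄}·x⁰_{J̄})·z over all pairs (y, z) with y ∈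 F(z). -/
open Matrix BigOperators

theorem le_psi_aux {m n : ℕ} (A : Matrix (Fin m) (Fin n) ℝ)
    (c d x0 : Fin n → ℝ) (hx0 : ∀ j, 0 ≤ x0 j) (z : ℝ) (y : Fin n → ℝ)
    (hy : y ∈ Dfeas A d x0 z) : c ⬝ᵥ y ≤ psi A c d x0 z := by
  refine le_csSup ⟨∑ j, |c j| * (|x0 j * z| + d j), ?_⟩ ⟨y, hy, rfl⟩
  rintro _ ⟨w, ⟨-, h1, h2⟩, rfl⟩
  refine Finset.sum_le_sum fun j _ => ?_
  have hw : |w j| ≤ |x0 j * z| + d j := by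
    have a1 := le_abs_self (x0 j * z)
    have a2 := neg_abs_le (x0 j * z)
    have a3 := abs_nonneg (x0 j * z)
    rcases (hx0 j).eq_or_lt with h | h
    · obtain ⟨p, q⟩ := h1 j h.symm
      rw [abs_le]; constructor <;> linarith
    · obtain ⟨p, q⟩ := h2 j h
      rw [abs_le]; constructor <;> linarith
  calc c j * w j ≤ |c j * w j| := le_abs_self _
    _ = |c j| * |w j| := abs_mul _ _
    _ ≤ _ := mul_le_mul_of_nonneg_left hw (abs_nonneg _)

theorem Dfeas_comb_aux {m n : ℕ} (A : Matrix (Fin m) (Fin n) ℝ)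
    (d x0 : Fin n → ℝ) (z w t : ℝ) (ht0 : 0 ≤ t) (ht1 : t ≤ 1) (y v : Fin n → ℝ)
    (hy : y ∈ Dfeas A d x0 z) (hv : v ∈ Dfeas A d x0 w) :
    (1 - t) • v + t • y ∈ Dfeas A d x0 (w + t * (z - w)) := by
  obtain ⟨y0, y1, y2⟩ := hy
  obtain ⟨v0, v1, v2⟩ := hv
  have hs : 0 ≤ 1 - t := by linarith
  refine ⟨?_, fun j hj => ?_, fun j hj => ?_⟩
  · rw [Matrix.mulVec_add, Matrix.mulVec_smul, Matrix.mulVec_smul, y0, v0]; simp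
  · obtain ⟨p, q⟩ := y1 j hj
    obtain ⟨p', q'⟩ := v1 j hj
    have := mul_le_mul_of_nonneg_left p ht0
    have := mul_le_mul_of_nonneg_left q ht0
    have := mul_le_mul_of_nonneg_left p' hs
    have := mul_le_mul_of_nonneg_left q' hs
    simp only [Pi.add_apply, Pi.smul_apply, smul_eq_mul]
    constructor <;> linarith
  · obtain ⟨p, q⟩ := y2 j hj
    obtain ⟨p', q'⟩ := v2 j hj
    have := mul_le_mul_of_nonneg_left p ht0
    have := mul_le_mul_of_nonneg_left q ht0
    have := mul_le_mul_of_nonneg_left p' hs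
    have := mul_le_mul_of_nonneg_left q' hs
    simp only [Pi.add_apply, Pi.smul_apply, smul_eq_mul]
    constructor <;> linarith

/-- if `ψ` is linear with slope `k⁻` on `[ẑ−ε, ẑ]` and slope `k⁺` on
`[ẑ, ẑ+ε]` with `k⁺ ≤ δ ≤ k⁻`, and `ȳ` attains `ψ(ẑ)`, then `(ȳ, ẑ)` maximizes
`c·y − δ·z` over all pairs `(y, z)` with `y ∈ F(z)`. -/
theorem critical_value_interior {m n : ℕ} (A : Matrix (Fin m) (Fin n) ℝ)
    (c d x0 : Fin n → ℝ) (hd : ∀ j, 0 < d j) (hx0 : ∀ j, 0 ≤ x0 j) (K : ℝ)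
    (δ : ℝ) (hδ : δ = (∑ j, if 0 < x0 j then c j * x0 j else 0) - K)
    (hall : ∀ z : ℝ, (Dfeas A d x0 z).Nonempty)
    (zhat ε : ℝ) (hε : 0 < ε) (km kp : ℝ)
    (hkm : ∀ z ∈ Set.Icc (zhat - ε) zhat,
      psi A c d x0 z = psi A c d x0 zhat + km * (z - zhat))
    (hkp : ∀ z ∈ Set.Icc zhat (zhat + ε),
      psi A c d x0 z = psi A c d x0 zhat + kp * (z - zhat))
    (hkpδ : kp ≤ δ) (hδkm : δ ≤ km)
    (ybar : Fin n → ℝ) (hybar : ybar ∈ Dfeas A d x0 zhat)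
    (hybaropt : c ⬝ᵥ ybar = psi A c d x0 zhat) :
    ∀ z : ℝ, ∀ y ∈ Dfeas A d x0 z, c ⬝ᵥ y - δ * z ≤ c ⬝ᵥ ybar - δ * zhat := by
  intro z y hy
  have ha := abs_nonneg (z - zhat)
  have hpos : 0 < ε + |z - zhat| := by linarith
  obtain ⟨t, ht⟩ : ∃ t, t = ε / (ε + |z - zhat|) := ⟨_, rfl⟩
  have ht0 : 0 < t := by rw [ht]; positivity
  have ht1 : t ≤ 1 := by rw [ht, div_le_one hpos]; linarith
  have hte : t * (ε + |z - zhat|) = ε := by rw [ht]; field_simp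
  have hta : t * |z - zhat| ≤ ε := by nlinarith
  have hw := le_psi_aux A c d x0 hx0 _ _
    (Dfeas_comb_aux A d x0 z zhat t ht0.le ht1 y ybar hy hybar)
  have hb : psi A c d x0 (zhat + t * (z - zhat)) ≤
      psi A c d x0 zhat + δ * (t * (z - zhat)) := by
    rcases le_total zhat z with h | h
    · have h0 : 0 ≤ t * (z - zhat) := mul_nonneg ht0.le (by linarith)
      rw [abs_of_nonneg (by linarith)] at hta
      rw [hkp _ ⟨by linarith, by linarith⟩]
      have := mul_le_mul_of_nonneg_right hkpδ h0
      linarith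
    · have h0 : t * (z - zhat) ≤ 0 := mul_nonpos_of_nonneg_of_nonpos ht0.le (by linarith)
      rw [abs_of_nonpos (by linarith)] at hta
      rw [hkm _ ⟨by linarith, by linarith⟩]
      have := mul_le_mul_of_nonpos_right hδkm h0
      linarith
  rw [dotProduct_add, dotProduct_smul, dotProduct_smul, smul_eq_mul, smul_eq_mul] at hw
  have hf : t * (c ⬝ᵥ y - δ * z) ≤ t * (c ⬝ᵥ ybar - δ * zhat) := by
    linarith
  exact le_of_mul_le_mul_left hf ht0
end

section
/- Let δ = c_{J̄}·x⁰_{J̄} − K. Suppose there exist real numbers z_l < z_r such that F(z) ≠ ∅ if and only if z ∈ [z_l, z_r], and suppose there exist ε ∈ (0, z_r − z_l] and k ∈ ℝ with ψ(z) = ψ(z_r) + k·(z − z_r) for all z ∈ [z_r − ε, z_r] and k ≥ δ. If ȳ ∈ F(z_r) satisfies c·ȳ = ψ(z_r), then for every z ∈ ℝ and every y ∈ F(z) one has c·y − δ·z ≤ c·ȳ − δ·z_r; that is, (ȳ, z_r) is an optimal solution of the problem of maximizing c·y + (K − c_{J̄}·x⁰_{J̄})·z over all pairs (y, z) with y ∈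 F(z). -/
open Matrix BigOperators

theorem Dfeas_bdd {m n : ℕ} (A : Matrix (Fin m) (Fin n) ℝ)
    (c d x0 : Fin n → ℝ) (hd : ∀ j, 0 < d j) (hx0 : ∀ j, 0 ≤ x0 j) (z : ℝ) :
    BddAbove ((fun y => c ⬝ᵥ y) '' Dfeas A d x0 z) := by
  refine ⟨∑ j, |c j| * (|x0 j * z| + d j), ?_⟩
  rintro _ ⟨y, ⟨-, h1, h2⟩, rfl⟩
  refine Finset.sum_le_sum fun j _ => ?_
  have hy : |y j| ≤ |x0 j * z| + d j := by
    have hdj := hd j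
    have u1 := neg_abs_le (x0 j * z)
    have u2 := le_abs_self (x0 j * z)
    rw [abs_le]
    rcases (hx0 j).eq_or_lt with h | h
    · obtain ⟨p, q⟩ := h1 j h.symm
      have := abs_nonneg (x0 j * z)
      constructor <;> linarith
    · obtain ⟨p, q⟩ := h2 j h
      constructor <;> linarith
  calc c j * y j ≤ |c j * y j| := le_abs_self _
    _ = |c j| * |y j| := abs_mul _ _
    _ ≤ _ := mul_le_mul_of_nonneg_left hy (abs_nonneg _)

/-- if `F(z) ≠ ∅` exactly on `[z_l, z_r]`, `ψ` is linear with slope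
`k ≥ δ` on `[z_r−ε, z_r]`, and `ȳ` attains `ψ(z_r)`, then `(ȳ, z_r)` maximizes
`c·y − δ·z` over all pairs `(y, z)` with `y ∈ F(z)`. -/
theorem critical_value_right_break {m n : ℕ} (A : Matrix (Fin m) (Fin n) ℝ)
    (c d x0 : Fin n → ℝ) (hd : ∀ j, 0 < d j) (hx0 : ∀ j, 0 ≤ x0 j) (K : ℝ)
    (δ : ℝ) (hδ : δ = (∑ j, if 0 < x0 j then c j * x0 j else 0) - K)
    (zl zr : ℝ) (hlt : zl < zr)
    (hiff : ∀ z : ℝ, (Dfeas A d x0 z).Nonempty ↔ z ∈ Set.Icc zl zr)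
    (ε : ℝ) (hε0 : 0 < ε) (hεle : ε ≤ zr - zl) (k : ℝ)
    (hk : ∀ z ∈ Set.Icc (zr - ε) zr,
      psi A c d x0 z = psi A c d x0 zr + k * (z - zr))
    (hkδ : δ ≤ k)
    (ybar : Fin n → ℝ) (hybar : ybar ∈ Dfeas A d x0 zr)
    (hybaropt : c ⬝ᵥ ybar = psi A c d x0 zr) :
    ∀ z : ℝ, ∀ y ∈ Dfeas A d x0 z, c ⬝ᵥ y - δ * z ≤ c ⬝ᵥ ybar - δ * zr := by
  intro z y hy
  have hz := (hiff z).1 ⟨y, hy⟩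
  obtain ⟨hz1, hz2⟩ := hz
  have hL : 0 < zr - zl := by linarith
  obtain ⟨t, ht⟩ : ∃ t, t = ε / (zr - zl) := ⟨_, rfl⟩
  have ht0 : 0 < t := by rw [ht]; positivity
  have ht1 : t ≤ 1 := by rw [ht]; exact (div_le_one hL).2 hεle
  have htε : t * (zr - zl) = ε := by rw [ht]; field_simp
  have hw : (1 - t) • ybar + t • y ∈ Dfeas A d x0 (zr + t * (z - zr)) := by
    obtain ⟨a1, a2, a3⟩ := hybar
    obtain ⟨b1, b2, b3⟩ := hy
    have hs : 0 ≤ 1 - t := by linarith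
    refine ⟨?_, ?_, ?_⟩
    · rw [Matrix.mulVec_add, Matrix.mulVec_smul, Matrix.mulVec_smul, a1, b1]; simp
    · intro j hj
      obtain ⟨p1, p2⟩ := a2 j hj
      obtain ⟨q1, q2⟩ := b2 j hj
      simp only [Pi.add_apply, Pi.smul_apply, smul_eq_mul]
      have := mul_le_mul_of_nonneg_left p1 hs
      have := mul_le_mul_of_nonneg_left p2 hs
      have := mul_le_mul_of_nonneg_left q1 ht0.le
      have := mul_le_mul_of_nonneg_left q2 ht0.le
      constructor <;> linarith
    · intro j hj
      obtain ⟨p1, p2⟩ := a3 j hj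
      obtain ⟨q1, q2⟩ := b3 j hj
      simp only [Pi.add_apply, Pi.smul_apply, smul_eq_mul]
      have := mul_le_mul_of_nonneg_left p1 hs
      have := mul_le_mul_of_nonneg_left p2 hs
      have := mul_le_mul_of_nonneg_left q1 ht0.le
      have := mul_le_mul_of_nonneg_left q2 ht0.le
      constructor <;> linarith
  have hle := le_csSup (Dfeas_bdd A c d x0 hd hx0 (zr + t * (z - zr)))
    (Set.mem_image_of_mem (fun y => c ⬝ᵥ y) hw)
  have hz' : zr + t * (z - zr) ∈ Set.Icc (zr - ε) zr := by
    constructor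
    · have := mul_le_mul_of_nonneg_left hz1 ht0.le
      linarith
    · have := mul_le_mul_of_nonneg_left hz2 ht0.le
      linarith
  have h2 := hk _ hz'
  unfold psi at h2 hybaropt
  rw [h2, ← hybaropt] at hle
  simp only [dotProduct_add, dotProduct_smul, smul_eq_mul] at hle
  have h3 : t * (c ⬝ᵥ y - c ⬝ᵥ ybar) ≤ t * (k * (z - zr)) := by linarith
  have h4 := le_of_mul_le_mul_left h3 ht0
  have h5 : 0 ≤ (k - δ) * (zr - z) := mul_nonneg (by linarith) (by linarith)
  linarith
end

section
/- Let δ = c_{J̄}·x⁰_{J̄} − K. Suppose there exist z₀ ∈ ℝ and k ∈ ℝ such that F(z) ≠ ∅ for every z ≥ z₀, ψ(z) = ψ(z₀) + k·(z − z₀) for every z ≥ z₀, and k > δ. Then the set {c·y − δ·z : z ∈ ℝ, y ∈ F(z)} is not bounded above; that is, the problem of maximizing c·y + (K − c_{J̄}·x⁰_{J̄})·z over all pairs (y, z) with y ∈ F(z) is unbounded. -/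
open Matrix BigOperators

/-- if `F(z) ≠ ∅` for all `z ≥ z₀` and `ψ` is eventually linear with slope
`k > δ`, then the problem of maximizing `c·y − δ·z` over pairs `(y, z)` with `y ∈ F(z)`
is unbounded. -/
theorem unbounded_of_slope_gt {m n : ℕ} (A : Matrix (Fin m) (Fin n) ℝ)
    (c d x0 : Fin n → ℝ) (hd : ∀ j, 0 < d j) (hx0 : ∀ j, 0 ≤ x0 j) (K : ℝ)
    (δ : ℝ) (hδ : δ = (∑ j, if 0 < x0 j then c j * x0 j else 0) - K)
    (z₀ k : ℝ)
    (hne : ∀ z : ℝ, z₀ ≤ z → (Dfeas A d x0 z).Nonempty)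
    (hlin : ∀ z : ℝ, z₀ ≤ z → psi A c d x0 z = psi A c d x0 z₀ + k * (z - z₀))
    (hk : δ < k) :
    ¬ BddAbove {t : ℝ | ∃ z : ℝ, ∃ y ∈ Dfeas A d x0 z, t = c ⬝ᵥ y - δ * z} := by
  rintro ⟨M, hM⟩
  have key : ∀ z, z₀ ≤ z → psi A c d x0 z ≤ M + δ * z := by
    intro z hz
    refine csSup_le ((hne z hz).image _) ?_
    rintro _ ⟨y, hy, rfl⟩
    have h := hM ⟨z, y, hy, rfl⟩
    show c ⬝ᵥ y ≤ M + δ * z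
    linarith
  have hp : 0 < k - δ := sub_pos.2 hk
  set B := M + δ * z₀ - psi A c d x0 z₀ with hB
  have ht : 0 ≤ (|B| + 1) / (k - δ) := by positivity
  have hz : z₀ ≤ z₀ + (|B| + 1) / (k - δ) := by linarith
  have h1 := key _ hz
  rw [hlin _ hz] at h1
  have h2 : (k - δ) * ((|B| + 1) / (k - δ)) = |B| + 1 := by field_simp
  have h3 := le_abs_self B
  nlinarith
end
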